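/- arXiv:2412.03559 — 2 statements merged into one kernel-verified Lean document; each statement's English description precedes it below -/
import Mathlib

section
/- (Gustafson's A_r extension of Dougall's ₂H₂ summation.) Let r ≥ 1 and let a_1,…,a_{r+1}, b_1,…,b_{r+1}, x_1,…,x_r ∈ ℂ be generic (no gamma function evaluated at a nonpositive integer and no denominator vanishing, with x_i−x_j ∉ ℤ for i≠j) such that Re(−r + Σ_{j=1}^{r+1}(b_j−a_j)) > 0. Then Σ_{k∈ℤ^r} [ ∏_{1≤i<j≤r} ((x_i+k_i−x_j−k_j)/(x_i−x_j)) · ∏_{i=1}^r ∏_{j=1}^{r+1} ((a_j+x_i)_{k_i}/(b_j+x_i)_{k_i}) ] = Γ(−r+Σ_{j=1}^{r+1}(b_j−a_j)) · ∏_{i=1}^r ∏_{j=1}^{r+1} Γ(1−a_j−x_i)Γ(b_j+x_i) / [ ∏_{i,j=1}^{r+1} Γ(b_j−a_i) · ∏_{i,j=1}^{r} Γ(1+x_j−x_i) ], the multilateral sum converging absolutely. -/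
open Complex

/-- The shifted factorial `(a)_k = Γ(a+k)/Γ(a)` for integer `k`, given by the
(generically equal) product formulas. -/
noncomputable def poch (a : ℂ) (k : ℤ) : ℂ :=
  if 0 ≤ k then ∏ j ∈ Finset.range k.toNat, (a + (j : ℂ))
  else (∏ j ∈ Finset.range (-k).toNat, (a - 1 - (j : ℂ)))⁻¹

/-!
Divide the summand by the Gamma factors of the right-hand side: since
`(a)_k / (b)_k = (-1)^k Γ(1-a) Γ(b) / (Γ(1-a-k) Γ(b+k))`, it becomes entire in all parameters, and
expanding the Vandermonde determinant turns the multilateral series into a determinant of bilateral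
series in one variable each. A telescoping sum gives a contiguous relation for `b_j ↦ b_j + 1`,
which the right-hand side also satisfies, so `Re (b_i - a_j)` may be assumed large. Then the
bilateral series are entire and (anti)periodic in `x_i`, and grow so slowly that they are
trigonometric polynomials of degree less than `r`; their determinant is therefore a constant times
`∏_{i<j} sin π(x_i - x_j)`. The constant is read off at `x_i = 1 - b_i`, where the series is
unilateral, by letting `b_{r+1}` tend to infinity along the contiguous relation. This needs the
sines not to vanish there, that is `b_i - b_j ∉ ℤ`, a restriction removed by continuity in `b`.
-/

open Finset Filter Topology Asymptotics

section GammaAsymptotics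

lemma inv_Gamma_eq_mul_inv_Gamma_add_one (s : ℂ) : (Gamma s)⁻¹ = s * (Gamma (s + 1))⁻¹ :=
  one_div_Gamma_eq_self_mul_one_div_Gamma_add_one s

lemma inv_Gamma_eq_prod_mul_inv_Gamma_add_natCast (s : ℂ) (n : ℕ) :
    (Gamma s)⁻¹ = (∏ j ∈ range n, (s + j)) * (Gamma (s + n))⁻¹ := by
  induction n with
  | zero => simp
  | succ n ih =>
    rw [ih, prod_range_succ, inv_Gamma_eq_mul_inv_Gamma_add_one (s + n), Nat.cast_succ, add_assoc,
      mul_assoc]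

lemma inv_Gamma_one_sub {z : ℂ} (hz : Gamma z ≠ 0) :
    (Gamma (1 - z))⁻¹ = Gamma z * (sin (Real.pi * z) / Real.pi) := by
  rw [← inv_div, ← Gamma_mul_Gamma_one_sub, mul_inv, mul_inv_cancel_left₀ hz]

lemma tendsto_Gamma_add_natCast_div_of_one_lt_re {s : ℂ} (hs : 1 < s.re) :
    Tendsto (fun n : ℕ ↦ Gamma (s + n) / ((n : ℂ) ^ s * Gamma n)) atTop (𝓝 1) := by
  have hΓ : Gamma (s - 1) ≠ 0 := Gamma_ne_zero_of_re_pos (by simpa using hs)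
  have hlim := (tendsto_const_nhds (x := Gamma (s - 1))).div (GammaSeq_tendsto_Gamma (s - 1)) hΓ
  rw [div_self hΓ] at hlim
  refine hlim.congr' ?_
  filter_upwards [eventually_ne_atTop 0] with n hn
  have hn' : (n : ℂ) ≠ 0 := Nat.cast_ne_zero.mpr hn
  have hfact : (n.factorial : ℂ) = n * Gamma n := by
    rw [← Gamma_nat_eq_factorial, Gamma_add_one _ hn']
  have hprod : ∏ j ∈ range (n + 1), (s - 1 + j) = Gamma (s + n) / Gamma (s - 1) := by
    have hsn : Gamma (s + n) ≠ 0 := Gamma_ne_zero_of_re_pos (by simp; linarith)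
    have h := inv_Gamma_eq_prod_mul_inv_Gamma_add_natCast (s - 1) (n + 1)
    rw [Nat.cast_succ, show s - 1 + (n + 1) = s + n by ring] at h
    rw [← inv_mul_eq_div, h, inv_mul_cancel_right₀ hsn]
  rw [Pi.div_apply, GammaSeq, hprod, hfact, cpow_sub _ _ hn', cpow_one]
  field_simp

theorem tendsto_Gamma_add_natCast_div (s : ℂ) :
    Tendsto (fun n : ℕ ↦ Gamma (s + n) / ((n : ℂ) ^ s * Gamma n)) atTop (𝓝 1) := by
  obtain ⟨m, hm⟩ := exists_nat_gt (1 - s.re)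
  induction m generalizing s with
  | zero => exact tendsto_Gamma_add_natCast_div_of_one_lt_re (by simpa using hm)
  | succ m ih =>
    have hstep := (ih (s + 1) (by push_cast at hm; simp; linarith)).mul
      (tendsto_natCast_div_add_atTop s)
    rw [one_mul] at hstep
    refine hstep.congr' ?_
    filter_upwards [eventually_ne_atTop 0, eventually_gt_atTop ⌈‖s‖⌉₊] with n hn hns
    have hn' : (n : ℂ) ≠ 0 := Nat.cast_ne_zero.mpr hn
    have hsn : s + n ≠ 0 := fun h ↦ by
      rw [eq_neg_of_add_eq_zero_left h, norm_neg, norm_natCast, Nat.ceil_natCast] at hns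
      exact hns.false
    rw [add_right_comm, Gamma_add_one _ hsn, cpow_add _ _ hn', cpow_one, add_comm (n : ℂ)]
    field_simp

lemma tendsto_Gamma_add_natCast_div_Gamma (A B : ℂ) :
    Tendsto (fun n : ℕ ↦ Gamma (A + n) / Gamma (B + n) * (n : ℂ) ^ (B - A)) atTop (𝓝 1) := by
  have hlim := (tendsto_Gamma_add_natCast_div A).div (tendsto_Gamma_add_natCast_div B) one_ne_zero
  rw [div_one] at hlim
  refine hlim.congr' ?_
  filter_upwards [eventually_ne_atTop 0] with n hn
  have hn' : (n : ℂ) ≠ 0 := Nat.cast_ne_zero.mpr hn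
  have hΓ : Gamma (n : ℂ) ≠ 0 :=
    Gamma_ne_zero_of_re_pos (by simpa using Nat.pos_of_ne_zero hn)
  have hpow : (n : ℂ) ^ A ≠ 0 := by simp [cpow_eq_zero_iff, hn]
  rw [Pi.div_apply, cpow_sub _ _ hn']
  field_simp

lemma isBigO_Gamma_add_natCast_div_Gamma (A B : ℂ) :
    (fun n : ℕ ↦ Gamma (A + n) / Gamma (B + n)) =O[atTop] fun n : ℕ ↦ (n : ℝ) ^ (A - B).re := by
  have hbdd := (tendsto_Gamma_add_natCast_div_Gamma A B).isBigO_one ℝ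
  have hpow : (fun n : ℕ ↦ (n : ℂ) ^ (A - B)) =O[atTop] fun n : ℕ ↦ (n : ℝ) ^ (A - B).re :=
    .of_norm_eventuallyLE <| by
      filter_upwards [eventually_gt_atTop 0] with n hn using (norm_natCast_cpow_of_pos hn _).le
  refine (hbdd.mul hpow).congr' ?_ (by simp)
  filter_upwards [eventually_ne_atTop 0] with n hn
  have hpow0 : (n : ℂ) ^ (B - A) ≠ 0 := by simp [cpow_eq_zero_iff, hn]
  rw [← neg_sub B A, cpow_neg, mul_inv_cancel_right₀ hpow0]

end GammaAsymptotics

section GammaKernel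

/-- The bilateral hypergeometric kernel `1 / (Γ(1 - a - z) Γ(b + z))`, which up to sign and a factor
independent of `k` is `(a + z)_k / (b + z)_k` at `z + k`; unlike that ratio it is entire in
`a`, `b` and `z`. -/
noncomputable def gammaKernel (a b z : ℂ) : ℂ := (Gamma (1 - a - z))⁻¹ * (Gamma (b + z))⁻¹

lemma gammaKernel_symm (a b z : ℂ) : gammaKernel (1 - b) (1 - a) (-z) = gammaKernel a b z := by
  rw [gammaKernel, gammaKernel, mul_comm]
  ring_nf

lemma gammaKernel_eq_mul_gammaKernel_add_one (a b z : ℂ) :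
    gammaKernel a b z = (b + z) * gammaKernel a (b + 1) z := by
  rw [gammaKernel, gammaKernel, inv_Gamma_eq_mul_inv_Gamma_add_one (b + z), add_right_comm]
  ring

lemma add_mul_gammaKernel_add_one (a b z : ℂ) :
    (b + z) * gammaKernel a b (z + 1) = -(a + z) * gammaKernel a b z := by
  rw [gammaKernel, gammaKernel, inv_Gamma_eq_mul_inv_Gamma_add_one (b + z),
    inv_Gamma_eq_mul_inv_Gamma_add_one (1 - a - (z + 1)), ← add_assoc,
    show 1 - a - (z + 1) + 1 = 1 - a - z by ring]
  ring

lemma gammaKernel_add_natCast_isBigO (a b z : ℂ) :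
    (fun n : ℕ ↦ gammaKernel a b (z + n)) =O[atTop] fun n : ℕ ↦ (n : ℝ) ^ (a - b).re := by
  have hre : (a - b).re = (a + z - (b + z)).re := by simp
  have h1 := ((isBigO_Gamma_add_natCast_div_Gamma (a + z) (b + z)).const_mul_left
    (sin (Real.pi * (a + z)) / Real.pi))
  rw [hre]
  refine IsBigO.trans (.of_norm_eventuallyLE ?_) h1.norm_left
  filter_upwards [eventually_gt_atTop ⌈‖a + z‖⌉₊] with n hn
  have hΓ : Gamma (a + z + n) ≠ 0 := by
    refine Gamma_ne_zero_of_re_pos ?_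
    have := (Nat.le_ceil _).trans_lt (Nat.cast_lt (α := ℝ).mpr hn)
    have h2 := (abs_le.mp (abs_re_le_norm (a + z))).1
    rw [add_re, natCast_re]
    linarith
  have hsin : ‖sin (Real.pi * (a + z + n))‖ = ‖sin (Real.pi * (a + z))‖ := by
    rw [mul_add, mul_comm (Real.pi : ℂ) n, sin_antiperiodic.add_nat_mul_eq]
    simp
  rw [gammaKernel, show 1 - a - (z + n) = 1 - (a + z + n) by ring, inv_Gamma_one_sub hΓ,
    ← add_assoc b]
  simp only [norm_mul, norm_div, norm_inv, hsin]
  apply le_of_eq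
  ring

theorem gammaKernel_add_intCast_isBigO (a b z : ℂ) :
    (fun k : ℤ ↦ gammaKernel a b (z + k)) =O[cofinite] fun k : ℤ ↦ |(k : ℝ)| ^ (a - b).re := by
  have hpos {a b z : ℂ} : (fun k : ℤ ↦ gammaKernel a b (z + k)) =O[atTop]
      fun k : ℤ ↦ |(k : ℝ)| ^ (a - b).re := by
    rw [← Nat.map_cast_int_atTop, isBigO_map]
    simpa [Function.comp_def] using gammaKernel_add_natCast_isBigO a b z
  rw [Int.cofinite_eq, isBigO_sup]
  refine ⟨?_, hpos⟩
  have h := (hpos (a := 1 - b) (b := 1 - a) (z := -z)).comp_tendsto tendsto_neg_atBot_atTop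
  refine h.congr (fun k ↦ ?_) fun k ↦ ?_
  · rw [← gammaKernel_symm a b (z + k)]
    simp [neg_add_rev, add_comm]
  · simp

end GammaKernel

section KernelBound

lemma norm_sin_le_exp_abs_im (w : ℂ) : ‖sin w‖ ≤ Real.exp |w.im| := by
  have h1 : ‖exp (-w * I)‖ ≤ Real.exp |w.im| := by simp [norm_exp, le_abs_self]
  have h2 : ‖exp (w * I)‖ ≤ Real.exp |w.im| := by simp [norm_exp, neg_le_abs]
  rw [Complex.sin, norm_div, norm_mul, norm_I, mul_one, Complex.norm_two]
  linarith [norm_sub_le (exp (-w * I)) (exp (w * I))]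

lemma norm_ofReal_cpow_le_one {t : ℝ} (ht0 : 0 ≤ t) (ht1 : t ≤ 1) {w : ℂ} (hw : 0 ≤ w.re) :
    ‖(t : ℂ) ^ w‖ ≤ 1 := by
  rcases ht0.eq_or_lt with rfl | htpos
  · rcases eq_or_ne w 0 with rfl | hw0 <;> simp [*]
  · rw [norm_cpow_eq_rpow_re_of_pos htpos]
    exact Real.rpow_le_one ht0 ht1 hw

lemma norm_betaIntegral_le_one {u v : ℂ} (hu : 1 ≤ u.re) (hv : 1 ≤ v.re) :
    ‖betaIntegral u v‖ ≤ 1 := by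
  have hbound : ∀ t ∈ Set.uIoc (0 : ℝ) 1, ‖(t : ℂ) ^ (u - 1) * (1 - (t : ℂ)) ^ (v - 1)‖ ≤ 1 := by
    intro t ht
    rw [Set.uIoc_of_le zero_le_one] at ht
    rw [norm_mul, ← ofReal_one, ← ofReal_sub]
    exact mul_le_one₀ (norm_ofReal_cpow_le_one ht.1.le ht.2 (by simpa using hu)) (norm_nonneg _)
      (norm_ofReal_cpow_le_one (by linarith [ht.2]) (by linarith [ht.1]) (by simpa using hv))
  simpa [betaIntegral] using intervalIntegral.norm_integral_le_of_norm_le_const hbound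

lemma gammaKernel_eq_betaIntegral {a b z : ℂ} (haz : 0 < (a + z).re) (hab : 0 < (b - a).re) :
    gammaKernel a b z = (Gamma (b - a))⁻¹ * betaIntegral (a + z) (b - a) *
      (sin (Real.pi * (a + z)) / Real.pi) := by
  have hba : Gamma (b - a) ≠ 0 := Gamma_ne_zero_of_re_pos hab
  rw [gammaKernel, sub_sub, inv_Gamma_one_sub (Gamma_ne_zero_of_re_pos haz),
    betaIntegral_eq_Gamma_mul_div _ _ haz hab, show a + z + (b - a) = b + z by ring]
  field_simp

lemma norm_gammaKernel_le_of_one_le_re {a b z : ℂ} (haz : 1 ≤ (a + z).re) (hab : 1 ≤ (b - a).re) :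
    ‖gammaKernel a b z‖ ≤ ‖(Gamma (b - a))⁻¹‖ * Real.exp (Real.pi * |(a + z).im|) := by
  have hsin : ‖sin (Real.pi * (a + z))‖ ≤ Real.exp (Real.pi * |(a + z).im|) := by
    simpa [abs_mul, abs_of_pos Real.pi_pos] using norm_sin_le_exp_abs_im (Real.pi * (a + z))
  have hdiv : ‖sin (Real.pi * (a + z)) / Real.pi‖ ≤ Real.exp (Real.pi * |(a + z).im|) := by
    rw [norm_div, norm_real, Real.norm_of_nonneg Real.pi_pos.le]
    exact (div_le_self (norm_nonneg _) (by linarith [Real.pi_gt_three])).trans hsin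
  rw [gammaKernel_eq_betaIntegral (by linarith) (by linarith), norm_mul, norm_mul]
  exact mul_le_mul (mul_le_of_le_one_right (norm_nonneg _) (norm_betaIntegral_le_one haz hab)) hdiv
    (norm_nonneg _) (norm_nonneg _)

lemma continuous_inv_Gamma : Continuous fun s : ℂ ↦ (Gamma s)⁻¹ :=
  differentiable_one_div_Gamma.continuous

lemma continuous_gammaKernel : Continuous fun p : ℂ × ℂ × ℂ ↦ gammaKernel p.1 p.2.1 p.2.2 :=
  (continuous_inv_Gamma.comp (by fun_prop : Continuous fun p : ℂ × ℂ × ℂ ↦ 1 - p.1 - p.2.2)).mul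
    (continuous_inv_Gamma.comp (by fun_prop : Continuous fun p : ℂ × ℂ × ℂ ↦ p.2.1 + p.2.2))

lemma exists_norm_gammaKernel_le_of_le_re (R : ℝ) :
    ∃ C : ℝ, 0 ≤ C ∧ ∀ a b z : ℂ, ‖a‖ ≤ R → ‖b‖ ≤ R → 1 ≤ (b - a).re → R + 1 ≤ z.re →
      ‖gammaKernel a b z‖ ≤ C * Real.exp (Real.pi * |z.im|) := by
  obtain ⟨C, hC⟩ := (isCompact_closedBall (0 : ℂ) (R + R)).exists_bound_of_continuousOn
    continuous_inv_Gamma.continuousOn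
  refine ⟨|C| * Real.exp (Real.pi * R), by positivity, fun a b z ha hb hab hz ↦ ?_⟩
  have hre : 1 ≤ (a + z).re := by
    rw [add_re]
    linarith [neg_le_of_abs_le ((abs_re_le_norm a).trans ha)]
  have hΓ : ‖(Gamma (b - a))⁻¹‖ ≤ |C| := by
    refine (hC _ ?_).trans (le_abs_self C)
    rw [mem_closedBall_zero_iff]
    exact (norm_sub_le b a).trans (add_le_add hb ha)
  have him : |(a + z).im| ≤ R + |z.im| := by
    rw [add_im]
    exact (abs_add_le _ _).trans (by gcongr; exact (abs_im_le_norm a).trans ha)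
  calc ‖gammaKernel a b z‖
      ≤ ‖(Gamma (b - a))⁻¹‖ * Real.exp (Real.pi * |(a + z).im|) :=
        norm_gammaKernel_le_of_one_le_re hre hab
    _ ≤ |C| * Real.exp (Real.pi * (R + |z.im|)) := by gcongr
    _ = |C| * Real.exp (Real.pi * R) * Real.exp (Real.pi * |z.im|) := by
        rw [mul_add, Real.exp_add, mul_assoc]

lemma exists_norm_gammaKernel_le_of_le_abs_re (R : ℝ) :
    ∃ C : ℝ, 0 ≤ C ∧ ∀ a b z : ℂ, ‖a‖ ≤ R → ‖b‖ ≤ R → 1 ≤ (b - a).re → R + 2 ≤ |z.re| →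
      ‖gammaKernel a b z‖ ≤ C * Real.exp (Real.pi * |z.im|) := by
  obtain ⟨C, hC, hbound⟩ := exists_norm_gammaKernel_le_of_le_re (R + 1)
  have hone {w : ℂ} (hw : ‖w‖ ≤ R) : ‖1 - w‖ ≤ R + 1 := by
    linarith [norm_sub_le 1 w, norm_one (α := ℂ)]
  refine ⟨C, hC, fun a b z ha hb hab hz ↦ ?_⟩
  rcases le_abs.mp hz with hpos | hneg
  · exact hbound a b z (by linarith) (by linarith) hab (by linarith)
  · simpa [gammaKernel_symm] using
      hbound (1 - b) (1 - a) (-z) (hone hb) (hone ha) (by simpa using hab) (by simp; linarith)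

lemma norm_gammaKernel_le_norm_gammaKernel_add_one {R : ℝ} {a b z : ℂ} (ha : ‖a‖ ≤ R)
    (hb : ‖b‖ ≤ R) (hz : R + 1 ≤ |z.im|) :
    ‖gammaKernel a b z‖ ≤ (2 * R + 1) * ‖gammaKernel a b (z + 1)‖ := by
  have haz : 1 ≤ ‖a + z‖ := by
    have him := abs_sub_abs_le_abs_sub z.im (-a.im)
    rw [abs_neg, sub_neg_eq_add, add_comm, ← add_im] at him
    linarith [abs_im_le_norm (a + z), abs_im_le_norm a]
  have hbz : ‖b + z‖ ≤ (2 * R + 1) * ‖a + z‖ := by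
    have htri := norm_add_le (b - a) (a + z)
    rw [show b - a + (a + z) = b + z by ring] at htri
    nlinarith [norm_sub_le b a, norm_nonneg a]
  have hrec : ‖a + z‖ * ‖gammaKernel a b z‖ = ‖b + z‖ * ‖gammaKernel a b (z + 1)‖ := by
    rw [← norm_mul, ← norm_mul, add_mul_gammaKernel_add_one, neg_mul, norm_neg]
  refine le_of_mul_le_mul_left ?_ (zero_lt_one.trans_le haz)
  calc ‖a + z‖ * ‖gammaKernel a b z‖ = ‖b + z‖ * ‖gammaKernel a b (z + 1)‖ := hrec
    _ ≤ (2 * R + 1) * ‖a + z‖ * ‖gammaKernel a b (z + 1)‖ := by gcongr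
    _ = ‖a + z‖ * ((2 * R + 1) * ‖gammaKernel a b (z + 1)‖) := by ring

lemma norm_gammaKernel_le_norm_gammaKernel_add_natCast {R : ℝ} {a b z : ℂ} (ha : ‖a‖ ≤ R)
    (hb : ‖b‖ ≤ R) (hz : R + 1 ≤ |z.im|) (n : ℕ) :
    ‖gammaKernel a b z‖ ≤ (2 * R + 1) ^ n * ‖gammaKernel a b (z + n)‖ := by
  have hR : 0 ≤ R := (norm_nonneg a).trans ha
  induction n with
  | zero => simp
  | succ n ih =>
    refine ih.trans ?_
    rw [pow_succ, mul_assoc, Nat.cast_succ, ← add_assoc]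
    gcongr
    exact norm_gammaKernel_le_norm_gammaKernel_add_one ha hb (by simpa using hz)

lemma exists_norm_gammaKernel_le_of_le_abs_im (R : ℝ) :
    ∃ C : ℝ, 0 ≤ C ∧ ∀ a b z : ℂ, ‖a‖ ≤ R → ‖b‖ ≤ R → 1 ≤ (b - a).re → R + 2 ≤ |z.im| →
      ‖gammaKernel a b z‖ ≤ C * Real.exp (Real.pi * |z.im|) := by
  obtain ⟨C, hC, hbound⟩ := exists_norm_gammaKernel_le_of_le_abs_re R
  set n := ⌈2 * R + 4⌉₊
  refine ⟨(|2 * R + 1| ^ n + 1) * C, by positivity, fun a b z ha hb hab hz ↦ ?_⟩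
  have hCexp : 0 ≤ C * Real.exp (Real.pi * |z.im|) := by positivity
  have hR : 0 ≤ R := (norm_nonneg a).trans ha
  rw [mul_assoc, add_one_mul, abs_of_nonneg (by positivity)]
  by_cases hre : R + 2 ≤ |z.re|
  · exact (hbound a b z ha hb hab hre).trans
      (le_add_of_nonneg_left (mul_nonneg (by positivity) hCexp))
  · have hn : R + 2 ≤ |(z + n).re| := by
      refine le_trans ?_ (le_abs_self _)
      rw [add_re, natCast_re]
      linarith [Nat.le_ceil (2 * R + 4), neg_abs_le z.re]
    have hshift := hbound a b (z + n) ha hb hab hn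
    rw [add_im, natCast_im, add_zero] at hshift
    calc ‖gammaKernel a b z‖ ≤ (2 * R + 1) ^ n * ‖gammaKernel a b (z + n)‖ :=
          norm_gammaKernel_le_norm_gammaKernel_add_natCast ha hb (by linarith) n
      _ ≤ (2 * R + 1) ^ n * (C * Real.exp (Real.pi * |z.im|)) := by gcongr
      _ ≤ _ := le_add_of_nonneg_right hCexp

lemma exists_norm_gammaKernel_le_of_norm_le (R : ℝ) :
    ∃ C : ℝ, ∀ a b z : ℂ, ‖a‖ ≤ R → ‖b‖ ≤ R → ‖z‖ ≤ R → ‖gammaKernel a b z‖ ≤ C := by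
  obtain ⟨C, hC⟩ := (isCompact_closedBall (0 : ℂ × ℂ × ℂ) R).exists_bound_of_continuousOn
    continuous_gammaKernel.continuousOn
  refine ⟨C, fun a b z ha hb hz ↦ hC (a, b, z) ?_⟩
  rw [mem_closedBall_zero_iff]
  exact max_le ha (max_le hb hz)

lemma exists_norm_gammaKernel_le_exp (R : ℝ) :
    ∃ C : ℝ, 0 ≤ C ∧ ∀ a b : ℂ, ‖a‖ ≤ R → ‖b‖ ≤ R → 1 ≤ (b - a).re → ∀ z : ℂ,
      ‖gammaKernel a b z‖ ≤ C * Real.exp (Real.pi * |z.im|) := by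
  obtain ⟨C₁, hC₁, hre⟩ := exists_norm_gammaKernel_le_of_le_abs_re R
  obtain ⟨C₂, hC₂, him⟩ := exists_norm_gammaKernel_le_of_le_abs_im R
  obtain ⟨C₃, hball⟩ := exists_norm_gammaKernel_le_of_norm_le (R + 2 + (R + 2))
  refine ⟨C₁ + C₂ + |C₃|, by positivity, fun a b ha hb hab z ↦ ?_⟩
  have hR : 0 ≤ R := (norm_nonneg a).trans ha
  have hexp : 1 ≤ Real.exp (Real.pi * |z.im|) := Real.one_le_exp (by positivity)
  rw [add_mul, add_mul]
  have h₁ : 0 ≤ C₁ * Real.exp (Real.pi * |z.im|) := by positivity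
  have h₂ : 0 ≤ C₂ * Real.exp (Real.pi * |z.im|) := by positivity
  have h₃ : |C₃| ≤ |C₃| * Real.exp (Real.pi * |z.im|) := le_mul_of_one_le_right (abs_nonneg _) hexp
  by_cases hzre : R + 2 ≤ |z.re|
  · linarith [hre a b z ha hb hab hzre, abs_nonneg C₃]
  by_cases hzim : R + 2 ≤ |z.im|
  · linarith [him a b z ha hb hab hzim, abs_nonneg C₃]
  have hz := norm_le_abs_re_add_abs_im z
  linarith [hball a b z (by linarith) (by linarith) (by linarith), le_abs_self C₃]

theorem exists_norm_gammaKernel_mul_pow_le (M : ℕ) (R : ℝ) :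
    ∃ C : ℝ, 0 ≤ C ∧ ∀ a b : ℂ, ‖a‖ ≤ R → ‖b‖ ≤ R → (M : ℝ) + 1 ≤ (b - a).re → ∀ z : ℂ,
      ‖gammaKernel a b z‖ * (1 + ‖z‖) ^ M ≤ C * Real.exp (Real.pi * |z.im|) := by
  induction M generalizing R with
  | zero => simpa using exists_norm_gammaKernel_le_exp R
  | succ M ih =>
    obtain ⟨C, hC, hbound⟩ := ih (R + 1)
    refine ⟨C * |R + 2| + C, by positivity, fun a b ha hb hab z ↦ ?_⟩
    rw [Nat.cast_succ] at hab
    have hsub1 : ‖b - 1‖ ≤ R + 1 := by linarith [norm_sub_le b 1, norm_one (α := ℂ)]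
    have h₁ := hbound a b (by linarith) (by linarith) (by linarith) z
    have h₂ := hbound a (b - 1) (by linarith) hsub1 (by simp at hab ⊢; linarith) z
    rw [gammaKernel_eq_mul_gammaKernel_add_one a (b - 1) z, sub_add_cancel, norm_mul] at h₂
    have hz : 1 + ‖z‖ ≤ |R + 2| + ‖b - 1 + z‖ := by
      have htri := norm_sub_le (b - 1 + z) (b - 1)
      rw [add_sub_cancel_left] at htri
      linarith [le_abs_self (R + 2)]
    calc ‖gammaKernel a b z‖ * (1 + ‖z‖) ^ (M + 1)
        = ‖gammaKernel a b z‖ * (1 + ‖z‖) ^ M * (1 + ‖z‖) := by ring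
      _ ≤ ‖gammaKernel a b z‖ * (1 + ‖z‖) ^ M * (|R + 2| + ‖b - 1 + z‖) := by gcongr
      _ = ‖gammaKernel a b z‖ * (1 + ‖z‖) ^ M * |R + 2| +
          ‖b - 1 + z‖ * ‖gammaKernel a b z‖ * (1 + ‖z‖) ^ M := by ring
      _ ≤ C * Real.exp (Real.pi * |z.im|) * |R + 2| + C * Real.exp (Real.pi * |z.im|) := by gcongr
      _ = (C * |R + 2| + C) * Real.exp (Real.pi * |z.im|) := by ring

end KernelBound

section EntireFunctions

theorem exists_eq_sum_pow_of_tendsto_div_pow {f : ℂ → ℂ} (hf : Differentiable ℂ f) (d : ℕ)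
    (hlim : Tendsto (fun w ↦ f w / w ^ d) (cocompact ℂ) (𝓝 0)) :
    ∃ c : Fin d → ℂ, ∀ w, f w = ∑ i, c i * w ^ (i : ℕ) := by
  induction d generalizing f with
  | zero =>
    exact ⟨0, fun w ↦ by simpa using hf.apply_eq_of_tendsto_cocompact w (by simpa using hlim)⟩
  | succ d ih =>
    have hslope : Differentiable ℂ (dslope f 0) := by
      rw [← differentiableOn_univ, differentiableOn_dslope univ_mem]
      exact hf.differentiableOn
    have hconst : Tendsto (fun w : ℂ ↦ f 0 * w⁻¹ ^ (d + 1)) (cocompact ℂ) (𝓝 0) := by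
      rw [← Metric.cobounded_eq_cocompact]
      simpa using (tendsto_inv₀_cobounded.pow (d + 1)).const_mul (f 0)
    obtain ⟨c, hc⟩ := ih hslope <| by
      have hdiff := hlim.sub hconst
      rw [sub_zero] at hdiff
      refine hdiff.congr' ?_
      filter_upwards [(isCompact_singleton (x := (0 : ℂ))).compl_mem_cocompact] with w hw
      rw [dslope_of_ne _ hw, slope_def_field, sub_zero, inv_pow]
      have hw0 : w ≠ 0 := hw
      field_simp
      ring
    refine ⟨Fin.cons (f 0) c, fun w ↦ ?_⟩
    have hfw : f w = f 0 + w * dslope f 0 w := by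
      rw [← sub_eq_iff_eq_add', ← sub_smul_dslope f 0 w, sub_zero, smul_eq_mul]
    simp only [hfw, hc w, Fin.sum_univ_succ, Fin.cons_zero, Fin.cons_succ, Fin.val_zero, pow_zero,
      mul_one, Fin.val_succ, pow_succ', Finset.mul_sum, mul_left_comm w]

open Function.Periodic

variable {h : ℝ} {f : ℂ → ℂ}

lemma differentiable_cuspFunction_of_tendsto (hh : 0 < h) (hf : Differentiable ℂ f)
    (hper : Function.Periodic f h)
    (hlim : Tendsto (fun z ↦ f z * qParam h z) (comap im atTop) (𝓝 0)) :
    Differentiable ℂ (cuspFunction h f) := by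
  have hq {q : ℂ} (hq0 : q ≠ 0) : qParam h (invQParam h q) = q := qParam_right_inv hh.ne' hq0
  rw [← differentiableOn_univ]
  refine differentiableOn_update_limUnder_of_isLittleO univ_mem (fun q hqne ↦ ?_) ?_
  · have hcusp : DifferentiableAt ℂ (cuspFunction h f) q := by
      rw [← hq hqne.2]
      exact differentiableAt_cuspFunction hh.ne' hper (hf _)
    refine (hcusp.congr_of_eventuallyEq ?_).differentiableWithinAt
    filter_upwards [isOpen_ne.mem_nhds hqne.2] with q' hq'
    exact (cuspFunction_eq_of_nonzero h f hq').symm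
  · rw [isLittleO_iff_tendsto' (by
      filter_upwards [self_mem_nhdsWithin] with q hq0 hinv
      exact absurd (by simpa using hinv) hq0)]
    have hvar : Tendsto (fun q ↦ (f ∘ invQParam h) q * q) (𝓝[≠] 0) (𝓝 0) := by
      refine (hlim.comp (invQParam_tendsto hh)).congr' ?_
      filter_upwards [self_mem_nhdsWithin] with q hq0
      simp only [Function.comp_apply, hq hq0]
    have hconst : Tendsto (fun q : ℂ ↦ (f ∘ invQParam h) 0 * q) (𝓝[≠] 0) (𝓝 0) := by
      refine Tendsto.mono_left ?_ nhdsWithin_le_nhds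
      exact (continuous_const_mul _).tendsto' _ _ (mul_zero _)
    simpa [sub_mul] using hvar.sub hconst

lemma tendsto_invQParam_cocompact (hh : 0 < h) :
    Tendsto (invQParam h) (cocompact ℂ) (comap im atBot) := by
  rw [tendsto_comap_iff]
  simp only [Function.comp_def, im_invQParam]
  exact (Real.tendsto_log_atTop.comp tendsto_norm_cocompact_atTop).const_mul_atTop_of_neg
    (div_neg_of_neg_of_pos (neg_neg_of_pos hh) (by positivity))

theorem exists_eq_sum_qParam_pow_of_periodic (hh : 0 < h) (hf : Differentiable ℂ f)
    (hper : Function.Periodic f h) (d : ℕ)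
    (htop : Tendsto (fun z ↦ f z * qParam h z) (comap im atTop) (𝓝 0))
    (hbot : Tendsto (fun z ↦ f z / qParam h z ^ d) (comap im atBot) (𝓝 0)) :
    ∃ c : Fin d → ℂ, ∀ z, f z = ∑ i, c i * qParam h z ^ (i : ℕ) := by
  have hcusp : ∀ z, cuspFunction h f (qParam h z) = f z := eq_cuspFunction hh.ne' hper
  obtain ⟨c, hc⟩ := exists_eq_sum_pow_of_tendsto_div_pow
    (differentiable_cuspFunction_of_tendsto hh hf hper htop) d <| by
      refine (hbot.comp (tendsto_invQParam_cocompact hh)).congr' ?_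
      filter_upwards [(isCompact_singleton (x := (0 : ℂ))).compl_mem_cocompact] with q hq
      rw [Function.comp_apply, ← hcusp, qParam_right_inv hh.ne' hq]
  exact ⟨c, fun z ↦ by rw [← hcusp, hc]⟩

end EntireFunctions

section SumsOfProducts

variable {R κ : Type*} [NormedCommRing R] [CompleteSpace R] {r : ℕ}

lemma summable_norm_prod_and_tsum_prod {f : Fin r → κ → R} (hf : ∀ i, Summable fun k ↦ ‖f i k‖) :
    (Summable fun k : Fin r → κ ↦ ‖∏ i, f i (k i)‖) ∧
      ∑' k : Fin r → κ, ∏ i, f i (k i) = ∏ i, ∑' k, f i k := by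
  induction r with
  | zero => exact ⟨.of_finite, by simp⟩
  | succ r ih =>
    obtain ⟨hsum, htsum⟩ := ih fun i ↦ hf i.succ
    let e := Fin.consEquiv fun _ : Fin (r + 1) ↦ κ
    have he (p : κ × (Fin r → κ)) :
        ∏ i, f i (e p i) = f 0 p.1 * ∏ i : Fin r, f i.succ (p.2 i) := by
      simp [e, Fin.prod_univ_succ, Fin.consEquiv]
    constructor
    · rw [← e.summable_iff]
      exact ((hf 0).mul_norm hsum).congr fun p ↦ by rw [Function.comp_apply, he]
    · rw [← e.tsum_eq, Fin.prod_univ_succ, ← htsum, tsum_mul_tsum_of_summable_norm (hf 0) hsum]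
      exact tsum_congr he

lemma summable_norm_det_and_tsum_det {f : Fin r → Fin r → κ → R}
    (hf : ∀ i j, Summable fun k ↦ ‖f i j k‖) :
    (Summable fun k : Fin r → κ ↦ ‖(Matrix.of fun i j ↦ f i j (k i)).det‖) ∧
      ∑' k : Fin r → κ, (Matrix.of fun i j ↦ f i j (k i)).det =
        (Matrix.of fun i j ↦ ∑' k, f i j k).det := by
  have hprod (σ : Equiv.Perm (Fin r)) :=
    summable_norm_prod_and_tsum_prod fun i ↦ hf i (σ i)
  have hterm (σ : Equiv.Perm (Fin r)) : Summable fun k : Fin r → κ ↦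
      ‖((Equiv.Perm.sign σ : ℤ) : R) * ∏ i, f i (σ i) (k i)‖ :=
    .of_nonneg_of_le (fun _ ↦ norm_nonneg _) (fun _ ↦ norm_mul_le _ _)
      ((hprod σ).1.mul_left ‖((Equiv.Perm.sign σ : ℤ) : R)‖)
  have hdet (F : Matrix (Fin r) (Fin r) R) :
      F.det = ∑ σ : Equiv.Perm (Fin r), ((Equiv.Perm.sign σ : ℤ) : R) * ∏ i, F i (σ i) := by
    rw [← Matrix.det_transpose, Matrix.det_apply']
    rfl
  simp only [hdet, Matrix.of_apply]
  constructor
  · exact .of_nonneg_of_le (fun _ ↦ norm_nonneg _) (fun _ ↦ norm_sum_le _ _)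
      (summable_sum fun σ _ ↦ hterm σ)
  · rw [Summable.tsum_finsetSum fun σ _ ↦ (hterm σ).of_norm]
    refine sum_congr rfl fun σ _ ↦ ?_
    rw [(hprod σ).1.of_norm.tsum_mul_left, (hprod σ).2]

end SumsOfProducts

lemma exists_norm_eval_le {𝕜 : Type*} [NormedField 𝕜] {p : Polynomial 𝕜} {d : ℕ}
    (hd : p.natDegree ≤ d) : ∃ C, 0 ≤ C ∧ ∀ w, ‖p.eval w‖ ≤ C * (1 + ‖w‖) ^ d := by
  refine ⟨∑ i ∈ range (d + 1), ‖p.coeff i‖, by positivity, fun w ↦ ?_⟩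
  rw [Polynomial.eval_eq_sum_range' (Nat.lt_succ_of_le hd), sum_mul]
  refine (norm_sum_le _ _).trans (sum_le_sum fun i hi ↦ ?_)
  have hone : 1 ≤ 1 + ‖w‖ := le_add_of_nonneg_right (norm_nonneg w)
  rw [norm_mul, norm_pow]
  gcongr
  calc ‖w‖ ^ i ≤ (1 + ‖w‖) ^ i := by gcongr; linarith
    _ ≤ (1 + ‖w‖) ^ d := pow_le_pow_right₀ hone (mem_range_succ_iff.1 hi)

lemma isBigO_one_add_norm_add_intCast (z : ℂ) :
    (fun k : ℤ ↦ 1 + ‖z + k‖) =O[cofinite] fun k : ℤ ↦ |(k : ℝ)| := by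
  refine .of_bound (2 + ‖z‖) ?_
  filter_upwards [(Set.finite_singleton (0 : ℤ)).compl_mem_cofinite] with k hk
  have hone : 1 ≤ |(k : ℝ)| := mod_cast Int.one_le_abs hk
  have htri := norm_add_le z k
  rw [norm_intCast] at htri
  rw [Real.norm_of_nonneg (by positivity), Real.norm_of_nonneg (abs_nonneg _)]
  nlinarith [norm_nonneg z]

section BilateralSum

variable {ι : Type*} [Fintype ι]

/-- The product over the parameter pairs of `gammaKernel`. -/
noncomputable def gammaKernelProd (a b : ι → ℂ) (z : ℂ) : ℂ := ∏ j, gammaKernel (a j) (b j) z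

/-- The `k`-th weight of a bilateral series based at `z`. Up to a factor independent of `k` this is
`∏ j, (a j + z)_k / (b j + z)_k`, but it is an entire function of `a`, `b` and `z`. -/
noncomputable def bilateralWeight (a b : ι → ℂ) (z : ℂ) (k : ℤ) : ℂ :=
  ((-1) ^ Fintype.card ι) ^ k * gammaKernelProd a b (z + k)

/-- The bilateral series with weights `bilateralWeight a b z` and numerator polynomial `p`. -/
noncomputable def bilateralSum (a b : ι → ℂ) (p : Polynomial ℂ) (z : ℂ) : ℂ :=
  ∑' k : ℤ, p.eval (z + k) * bilateralWeight a b z k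

/-- The difference `∑ b - ∑ a` of lower and upper parameters, which governs convergence. -/
def parametricExcess (a b : ι → ℂ) : ℂ := ∑ j, (b j - a j)

/-- The summand of Gustafson's series, cleared of the factors independent of `k`. -/
noncomputable def multilateralTerm {r : ℕ} (a b : ι → ℂ) (x : Fin r → ℂ) (k : Fin r → ℤ) : ℂ :=
  (Matrix.vandermonde fun i ↦ x i + k i).det * ∏ i, bilateralWeight a b (x i) (k i)

/-- Gustafson's series, cleared of the factors independent of the summation index. -/
noncomputable def multilateralSum {r : ℕ} (a b : ι → ℂ) (x : Fin r → ℂ) : ℂ :=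
  ∑' k : Fin r → ℤ, multilateralTerm a b x k

variable (a b : ι → ℂ)

lemma norm_bilateralWeight (z : ℂ) (k : ℤ) :
    ‖bilateralWeight a b z k‖ = ∏ j, ‖gammaKernel (a j) (b j) (z + k)‖ := by
  simp [bilateralWeight, gammaKernelProd, norm_prod]

lemma bilateralWeight_isBigO (z : ℂ) :
    bilateralWeight a b z =O[cofinite] fun k : ℤ ↦ |(k : ℝ)| ^ (-(parametricExcess a b).re) := by
  have hprod : (fun k : ℤ ↦ ∏ j, gammaKernel (a j) (b j) (z + k)) =O[cofinite]
      fun k : ℤ ↦ ∏ j, |(k : ℝ)| ^ (a j - b j).re := by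
    induction (univ : Finset ι) using Finset.cons_induction with
    | empty => simpa using isBigO_refl (fun _ : ℤ ↦ (1 : ℝ)) cofinite
    | cons j s hj ih =>
      simpa only [prod_cons] using (gammaKernel_add_intCast_isBigO (a j) (b j) z).mul ih
  have hexp : ∑ j, (a j - b j).re = -(parametricExcess a b).re := by
    simp [parametricExcess]
  refine (IsBigO.of_norm_le fun k ↦ ?_).trans (hprod.norm_left.trans_eventuallyEq ?_)
  · rw [norm_bilateralWeight, norm_prod]
  · filter_upwards [(Set.finite_singleton (0 : ℤ)).compl_mem_cofinite] with k hk
    rw [← hexp, Real.rpow_sum_of_pos (abs_pos.2 (Int.cast_ne_zero.2 hk))]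

variable {a b} {p : Polynomial ℂ} {d : ℕ}

lemma eval_mul_bilateralWeight_isBigO (hd : p.natDegree ≤ d) (z : ℂ) :
    (fun k : ℤ ↦ p.eval (z + k) * bilateralWeight a b z k) =O[cofinite]
      fun k : ℤ ↦ |(k : ℝ)| ^ (d - (parametricExcess a b).re) := by
  obtain ⟨C, -, hC⟩ := exists_norm_eval_le hd
  have heval : (fun k : ℤ ↦ p.eval (z + k)) =O[cofinite] fun k : ℤ ↦ |(k : ℝ)| ^ d :=
    (IsBigO.of_bound C (.of_forall fun k ↦ by
      rw [Real.norm_of_nonneg (by positivity)]; exact hC (z + k))).trans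
        ((isBigO_one_add_norm_add_intCast z).pow d)
  refine (heval.mul (bilateralWeight_isBigO a b z)).trans_eventuallyEq ?_
  filter_upwards [(Set.finite_singleton (0 : ℤ)).compl_mem_cofinite] with k hk
  rw [sub_eq_add_neg, Real.rpow_add (abs_pos.2 (Int.cast_ne_zero.2 hk)), Real.rpow_natCast]

lemma summable_eval_mul_bilateralWeight (hd : p.natDegree ≤ d)
    (hS : (d : ℝ) + 1 < (parametricExcess a b).re) (z : ℂ) :
    Summable fun k : ℤ ↦ p.eval (z + k) * bilateralWeight a b z k := by
  refine summable_of_isBigO (Real.summable_abs_int_rpow (lt_sub_iff_add_lt'.2 hS)) ?_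
  simpa only [neg_sub] using eval_mul_bilateralWeight_isBigO hd z

variable {r : ℕ}

lemma multilateralTerm_eq_det {p : Fin r → Polynomial ℂ} (hdeg : ∀ i, (p i).natDegree = i)
    (hmonic : ∀ i, (p i).Monic) (x : Fin r → ℂ) (k : Fin r → ℤ) :
    multilateralTerm a b x k = (Matrix.of fun i m ↦
      (p m).eval (x i + k i) * bilateralWeight a b (x i) (k i)).det := by
  rw [multilateralTerm, Matrix.det_eval_matrixOfPolynomials_eq_det_vandermonde _ p hdeg hmonic,
    mul_comm, ← Matrix.det_mul_column]
  simp only [Matrix.of_apply, mul_comm]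

lemma summable_norm_multilateralTerm_and_multilateralSum_eq_det {p : Fin r → Polynomial ℂ}
    (hdeg : ∀ i, (p i).natDegree = i) (hmonic : ∀ i, (p i).Monic)
    (hS : (r : ℝ) < (parametricExcess a b).re) (x : Fin r → ℂ) :
    (Summable fun k ↦ ‖multilateralTerm a b x k‖) ∧
      multilateralSum a b x = (Matrix.of fun i m ↦ bilateralSum a b (p m) (x i)).det := by
  have hsum (i m : Fin r) :
      Summable fun k : ℤ ↦ ‖(p m).eval (x i + k) * bilateralWeight a b (x i) k‖ := by
    refine (summable_eval_mul_bilateralWeight (hdeg m).le (lt_of_le_of_lt ?_ hS) _).norm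
    exact_mod_cast m.2
  simp only [multilateralSum, bilateralSum, multilateralTerm_eq_det hdeg hmonic]
  exact summable_norm_det_and_tsum_det
    (f := fun i m (k : ℤ) ↦ (p m).eval (x i + k) * bilateralWeight a b (x i) k) hsum

lemma summable_norm_multilateralTerm (hS : (r : ℝ) < (parametricExcess a b).re) (x : Fin r → ℂ) :
    Summable fun k ↦ ‖multilateralTerm a b x k‖ :=
  (summable_norm_multilateralTerm_and_multilateralSum_eq_det
    (fun i : Fin r ↦ Polynomial.natDegree_X_pow (i : ℕ)) (fun i ↦ Polynomial.monic_X_pow (i : ℕ))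
    hS x).1

lemma multilateralSum_eq_det {p : Fin r → Polynomial ℂ} (hdeg : ∀ i, (p i).natDegree = i)
    (hmonic : ∀ i, (p i).Monic) (hS : (r : ℝ) < (parametricExcess a b).re) (x : Fin r → ℂ) :
    multilateralSum a b x = (Matrix.of fun i m ↦ bilateralSum a b (p m) (x i)).det :=
  (summable_norm_multilateralTerm_and_multilateralSum_eq_det hdeg hmonic hS x).2

end BilateralSum

section Recurrence

lemma mul_det_succ_eq_of_sum_eq_zero {R : Type*} [CommRing R] {r : ℕ} {q : ℕ → R}
    {H : ℕ → Fin r → R} (hrel : ∀ i, ∑ m ∈ range (r + 1), q m * H m i = 0) :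
    q r * (Matrix.of fun i m : Fin r ↦ H (m + 1) i).det =
      (-1) ^ r * q 0 * (Matrix.of fun i m : Fin r ↦ H m i).det := by
  cases r with
  | zero => simp
  | succ s =>
    set A := Matrix.of fun i m : Fin (s + 1) ↦ H m i
    set A' := A.submatrix id (finRotate (s + 1)) with hA'
    have hlast : ∑ m, q (finRotate (s + 1) m) • A'.col m = (-q (s + 1)) • fun i ↦ H (s + 1) i := by
      funext i
      have hrotate := Equiv.sum_comp (finRotate (s + 1)) fun m ↦ q m * A i m
      have hi := hrel i
      rw [sum_range_succ, ← Fin.sum_univ_eq_sum_range fun m ↦ q m * H m i] at hi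
      simp only [Finset.sum_apply, Pi.smul_apply, smul_eq_mul]
      exact hrotate.trans (by simp only [A, Matrix.of_apply]; linear_combination hi)
    have hshift : A'.updateCol (Fin.last s) (fun i ↦ H (s + 1) i) =
        Matrix.of fun i m : Fin (s + 1) ↦ H (m + 1) i := by
      ext i m
      induction m using Fin.lastCases with
      | last => simp
      | cast m =>
        simp [hA', A]
    have hdet : -q (s + 1) * (Matrix.of fun i m : Fin (s + 1) ↦ H (m + 1) i).det =
        q 0 * ((-1) ^ s * A.det) := by
      have hsum := Matrix.det_updateCol_sum A' (Fin.last s) fun m ↦ q (finRotate (s + 1) m)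
      have hcol : (fun i ↦ ∑ m, q (finRotate (s + 1) m) • A' i m) =
          (-q (s + 1)) • fun i ↦ H (s + 1) i := by
        rw [← hlast]
        ext i
        simp [Finset.sum_apply, Matrix.col_apply]
      rw [hcol, Matrix.det_updateCol_smul, hshift, hA', Matrix.det_permute', sign_finRotate,
        finRotate_last] at hsum
      simpa using hsum
    rw [pow_succ]
    linear_combination -hdet

lemma tsum_int_sub_add_one {G : Type*} [AddCommGroup G] [TopologicalSpace G]
    [IsTopologicalAddGroup G] [T2Space G] {Φ : ℤ → G} (hΦ : Tendsto Φ cofinite (𝓝 0))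
    (hsum : Summable fun k ↦ Φ k - Φ (k + 1)) : ∑' k, (Φ k - Φ (k + 1)) = 0 := by
  rw [Int.cofinite_eq, tendsto_sup] at hΦ
  have hcast := tendsto_natCast_atTop_atTop (R := ℤ)
  have hpartial := (hΦ.1.comp (tendsto_neg_atTop_atBot.comp hcast)).sub (hΦ.2.comp hcast)
  rw [sub_zero] at hpartial
  exact tendsto_nhds_unique (hsum.hasSum.comp (tendsto_Ico_neg (R := ℤ)))
    (hpartial.congr fun N ↦ (sum_Ico_int_sub N Φ).symm)

lemma natDegree_prod_X_sub_C_sub_prod_lt {R : Type*} [CommRing R] [Nontrivial R] {n : ℕ}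
    (u v : Fin (n + 1) → R) :
    (∏ i, (Polynomial.X - Polynomial.C (u i)) - ∏ i, (Polynomial.X - Polynomial.C (v i))).natDegree
      < n + 1 := by
  have hmonic (w : Fin (n + 1) → R) :
      Polynomial.IsMonicOfDegree (∏ i, (Polynomial.X - Polynomial.C (w i))) (n + 1) :=
    ⟨by simp, Polynomial.monic_prod_X_sub_C w univ⟩
  exact (hmonic u).natDegree_sub_lt n.succ_ne_zero (hmonic v)

lemma coeff_prod_X_sub_C_sub_prod {R : Type*} [CommRing R] [Nontrivial R] {n : ℕ}
    (u v : Fin (n + 1) → R) :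
    (∏ i, (Polynomial.X - Polynomial.C (u i)) - ∏ i, (Polynomial.X - Polynomial.C (v i))).coeff n
      = ∑ i, v i - ∑ i, u i := by
  have hcoeff (w : Fin (n + 1) → R) :
      (∏ i, (Polynomial.X - Polynomial.C (w i))).coeff n = -∑ i, w i := by
    simpa using Polynomial.prod_X_sub_C_coeff_card_pred univ w (by simp)
  rw [Polynomial.coeff_sub, hcoeff, hcoeff]
  abel

lemma tendsto_abs_intCast_rpow {e : ℝ} (he : e < 0) :
    Tendsto (fun k : ℤ ↦ |(k : ℝ)| ^ e) cofinite (𝓝 0) := by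
  have habs : Tendsto (fun k : ℤ ↦ ‖(k : ℝ)‖) cofinite atTop :=
    tendsto_norm_cocompact_atTop.comp Int.tendsto_coe_cofinite
  simpa [Function.comp_def] using (tendsto_rpow_neg_atTop (neg_pos.2 he)).comp habs

lemma prod_mul_bilateralWeight_add_one {ι : Type*} [Fintype ι] (a b : ι → ℂ) (z : ℂ) (k : ℤ) :
    (∏ j, (b j + (z + k))) * bilateralWeight a b z (k + 1) =
      (∏ j, (a j + (z + k))) * bilateralWeight a b z k := by
  have hkernel : (∏ j, (b j + (z + k))) * gammaKernelProd a b (z + k + 1) =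
      (-1) ^ Fintype.card ι * ((∏ j, (a j + (z + k))) * gammaKernelProd a b (z + k)) := by
    simp only [gammaKernelProd, ← prod_mul_distrib, add_mul_gammaKernel_add_one, ← card_univ,
      ← prod_const, neg_mul, one_mul]
  have hsign : ((-1 : ℂ) ^ Fintype.card ι) * (-1) ^ Fintype.card ι = 1 := by simp [← mul_pow]
  rw [bilateralWeight, bilateralWeight, Int.cast_add, Int.cast_one, ← add_assoc,
    zpow_add_one₀ (by simp), mul_left_comm, hkernel]
  linear_combination ((-1) ^ Fintype.card ι) ^ k * (∏ j, (a j + (z + k))) *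
    gammaKernelProd a b (z + k) * hsign

lemma bilateralSum_prod_sub_prod {r : ℕ} {a b : Fin (r + 1) → ℂ}
    (hS : (r + 1 : ℝ) < (parametricExcess a b).re) {p : Polynomial ℂ} (hdeg : p.natDegree ≤ r)
    (hp : ∀ w, p.eval w = ∏ j, (a j + w) - ∏ j, (b j - 1 + w)) (z : ℂ) :
    bilateralSum a b p z = 0 := by
  set Φ : ℤ → ℂ := fun k ↦ -((∏ j, (b j - 1 + (z + k))) * bilateralWeight a b z k) with hΦ
  have hstep (k : ℤ) : Φ k - Φ (k + 1) = p.eval (z + k) * bilateralWeight a b z k := by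
    have hb : ∏ j, (b j - 1 + (z + (k + 1 : ℤ))) = ∏ j, (b j + (z + k)) :=
      prod_congr rfl fun j _ ↦ by push_cast; ring
    rw [hΦ]
    simp only [hp, hb, prod_mul_bilateralWeight_add_one]
    ring
  have hlim : Tendsto Φ cofinite (𝓝 0) := by
    set P : Polynomial ℂ := ∏ j, (Polynomial.X - Polynomial.C (1 - b j)) with hP
    have hPdeg : P.natDegree ≤ r + 1 := by
      rw [hP, Polynomial.natDegree_finsetProd_X_sub_C_eq_card, card_univ, Fintype.card_fin]
    have hPeval (w : ℂ) : P.eval w = ∏ j, (b j - 1 + w) := by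
      rw [hP, Polynomial.eval_prod]
      exact prod_congr rfl fun j _ ↦ by simp; ring
    have hO := eval_mul_bilateralWeight_isBigO (a := a) (b := b) hPdeg z
    simp only [hPeval] at hO
    exact hO.neg_left.trans_tendsto (tendsto_abs_intCast_rpow (by push_cast; linarith))
  have hsum := summable_eval_mul_bilateralWeight hdeg hS z
  simp only [bilateralSum, ← hstep] at hsum ⊢
  exact tsum_int_sub_add_one hlim hsum

lemma bilateralSum_comp_eq_sum {ι : Type*} [Fintype ι] {a b : ι → ℂ} {q L : Polynomial ℂ} {n : ℕ}
    (hq : q.natDegree < n) (hL : L.natDegree ≤ 1) (hS : (n : ℝ) < (parametricExcess a b).re)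
    (z : ℂ) : bilateralSum a b (q.comp L) z =
      ∑ m ∈ range n, q.coeff m * bilateralSum a b (L ^ m) z := by
  have hsum (m : ℕ) (hm : m ∈ range n) : Summable fun k : ℤ ↦
      q.coeff m * ((L ^ m).eval (z + k) * bilateralWeight a b z k) := by
    have hdeg : (L ^ m).natDegree ≤ m := by
      simpa using Polynomial.natDegree_pow_le_of_le m hL
    refine (summable_eval_mul_bilateralWeight hdeg (lt_of_le_of_lt ?_ hS) z).mul_left _
    exact_mod_cast mem_range.1 hm
  simp only [bilateralSum, ← tsum_mul_left]
  rw [← Summable.tsum_finsetSum hsum]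
  refine tsum_congr fun k ↦ ?_
  rw [Polynomial.eval_comp, Polynomial.eval_eq_sum_range' hq, sum_mul]
  simp only [Polynomial.eval_pow, mul_assoc]

section ContiguousParameters

variable {ι : Type*} [Fintype ι] [DecidableEq ι] (a b : ι → ℂ) (j : ι)

lemma parametricExcess_add_single (c : ℂ) :
    parametricExcess a (b + Pi.single j c) = parametricExcess a b + c := by
  simp [parametricExcess, sum_add_distrib, add_sub_right_comm]

lemma gammaKernelProd_eq_mul_add_single (z : ℂ) :
    gammaKernelProd a b z = (b j + z) * gammaKernelProd a (b + Pi.single j 1) z := by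
  rw [gammaKernelProd, gammaKernelProd, ← mul_prod_erase _ _ (mem_univ j),
    ← mul_prod_erase univ _ (mem_univ j), ← mul_assoc, Pi.add_apply, Pi.single_eq_same,
    ← gammaKernel_eq_mul_gammaKernel_add_one]
  congr 1
  refine prod_congr rfl fun i hi ↦ ?_
  rw [Pi.add_apply, Pi.single_eq_of_ne (ne_of_mem_erase hi), add_zero]

lemma bilateralSum_pow_eq_add_single (m : ℕ) (z : ℂ) :
    bilateralSum a b ((Polynomial.X + Polynomial.C (b j)) ^ m) z =
      bilateralSum a (b + Pi.single j 1) ((Polynomial.X + Polynomial.C (b j)) ^ (m + 1)) z := by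
  refine tsum_congr fun k ↦ ?_
  rw [bilateralWeight, bilateralWeight, gammaKernelProd_eq_mul_add_single a b j]
  simp only [Polynomial.eval_pow, Polynomial.eval_add, Polynomial.eval_X, Polynomial.eval_C]
  ring

end ContiguousParameters

lemma sum_coeff_mul_bilateralSum_pow_eq_zero {r : ℕ} {a b : Fin (r + 1) → ℂ}
    (hS : (r + 1 : ℝ) < (parametricExcess a b).re) (β z : ℂ) :
    ∑ m ∈ range (r + 1), (∏ i, (Polynomial.X - Polynomial.C (β - a i)) -
        ∏ i, (Polynomial.X - Polynomial.C (β + 1 - b i))).coeff m *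
      bilateralSum a b ((Polynomial.X + Polynomial.C β) ^ m) z = 0 := by
  have hdeg := natDegree_prod_X_sub_C_sub_prod_lt (fun i ↦ β - a i) (fun i ↦ β + 1 - b i)
  rw [← bilateralSum_comp_eq_sum hdeg (by simp) (mod_cast hS)]
  refine bilateralSum_prod_sub_prod hS ?_ (fun w ↦ ?_) z
  · rw [Polynomial.natDegree_comp, Polynomial.natDegree_X_add_C, mul_one]
    exact Nat.lt_succ_iff.1 hdeg
  · simp only [Polynomial.eval_comp, Polynomial.eval_sub, Polynomial.eval_prod,
      Polynomial.eval_X, Polynomial.eval_C, Polynomial.eval_add]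
    congr 1 <;> exact prod_congr rfl fun i _ ↦ by ring

theorem multilateralSum_recurrence {r : ℕ} {a b : Fin (r + 1) → ℂ}
    (hS : (r : ℝ) < (parametricExcess a b).re) (j : Fin (r + 1)) (x : Fin r → ℂ) :
    (parametricExcess a b - r) * multilateralSum a b x =
      (∏ i, (b j - a i)) * multilateralSum a (b + Pi.single j 1) x := by
  set b' := b + Pi.single j 1 with hb'
  have hexcess : parametricExcess a b' = parametricExcess a b + 1 :=
    parametricExcess_add_single a b j 1
  have hS' : ((r + 1 : ℕ) : ℝ) < (parametricExcess a b').re := by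
    rw [hexcess, add_re, one_re]; push_cast; linarith
  set L : Polynomial ℂ := Polynomial.X + Polynomial.C (b j) with hL
  have hmonic (m : Fin r) : (L ^ (m : ℕ)).Monic := (Polynomial.monic_X_add_C _).pow _
  have hdeg (m : Fin r) : (L ^ (m : ℕ)).natDegree = m := by simp [hL]
  set q := ∏ i, (Polynomial.X - Polynomial.C (b j - a i)) -
    ∏ i, (Polynomial.X - Polynomial.C (b j + 1 - b' i)) with hq
  have hqtop : q.coeff r = r - parametricExcess a b := by
    have hsum : ∑ i, (b j + 1 - b' i) - ∑ i, (b j - a i) = r + 1 - parametricExcess a b' := by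
      simp only [parametricExcess, sum_sub_distrib, sum_const, card_univ, Fintype.card_fin,
        nsmul_eq_mul, Nat.cast_succ]
      ring
    rw [hq, coeff_prod_X_sub_C_sub_prod, hsum, hexcess, add_sub_add_right_eq_sub]
  have hqzero : q.coeff 0 = (-1) ^ (r + 1) * ∏ i, (b j - a i) := by
    have hzero : ∏ i, (0 - (b j + 1 - b' i)) = 0 :=
      prod_eq_zero (mem_univ j) (by simp [hb'])
    simp only [hq, Polynomial.coeff_zero_eq_eval_zero, Polynomial.eval_sub, Polynomial.eval_prod,
      Polynomial.eval_X, Polynomial.eval_C, hzero]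
    simp only [zero_sub, prod_neg, card_univ, Fintype.card_fin, sub_zero]
  have hrel (z : ℂ) := sum_coeff_mul_bilateralSum_pow_eq_zero (mod_cast hS') (b j) z
  have hdet := mul_det_succ_eq_of_sum_eq_zero (q := q.coeff) fun i ↦ hrel (x i)
  rw [multilateralSum_eq_det hdeg hmonic hS,
    multilateralSum_eq_det hdeg hmonic (by push_cast at hS'; linarith)]
  simp only [hL, bilateralSum_pow_eq_add_single a b j, hqtop, hqzero] at hdet ⊢
  have hsign : ((-1 : ℂ) ^ r) * (-1) ^ r = 1 := by simp [← mul_pow]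
  linear_combination -hdet + (∏ i, (b j - a i)) * (Matrix.of fun i m : Fin r ↦
    bilateralSum a b' ((Polynomial.X + Polynomial.C (b j)) ^ (m : ℕ)) (x i)).det * hsign

end Recurrence

section UniformBounds

variable {ι : Type*} [Fintype ι]

lemma exists_norm_gammaKernelProd_mul_pow_le (M : ℕ) (R : ℝ) :
    ∃ C, 0 ≤ C ∧ ∀ a b : ι → ℂ, ‖a‖ ≤ R → ‖b‖ ≤ R → (∀ j, (M : ℝ) + 1 ≤ (b j - a j).re) → ∀ z,
      ‖gammaKernelProd a b z‖ * (1 + ‖z‖) ^ (M * Fintype.card ι) ≤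
        C * Real.exp (Real.pi * Fintype.card ι * |z.im|) := by
  obtain ⟨C, hC0, hC⟩ := exists_norm_gammaKernel_mul_pow_le M R
  refine ⟨C ^ Fintype.card ι, by positivity, fun a b ha hb hab z ↦ ?_⟩
  calc ‖gammaKernelProd a b z‖ * (1 + ‖z‖) ^ (M * Fintype.card ι)
      = ∏ j, (‖gammaKernel (a j) (b j) z‖ * (1 + ‖z‖) ^ M) := by
        rw [gammaKernelProd, norm_prod, prod_mul_distrib, pow_mul, prod_const, card_univ]
    _ ≤ ∏ _j : ι, (C * Real.exp (Real.pi * |z.im|)) :=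
        prod_le_prod (fun _ _ ↦ by positivity) fun j _ ↦ hC (a j) (b j)
          ((norm_le_pi_norm a j).trans ha) ((norm_le_pi_norm b j).trans hb) (hab j) z
    _ = C ^ Fintype.card ι * Real.exp (Real.pi * Fintype.card ι * |z.im|) := by
        rw [prod_const, mul_pow, ← Real.exp_nat_mul, card_univ, mul_left_comm, mul_assoc]

lemma one_add_abs_intCast_le (z : ℂ) (k : ℤ) :
    1 + |(k : ℝ)| ≤ (1 + |z.re|) * (1 + ‖z + k‖) := by
  have hre : |z.re + k| ≤ ‖z + k‖ := by simpa using abs_re_le_norm (z + k)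
  have htri : |(k : ℝ)| ≤ |z.re + k| + |z.re| := by
    simpa using abs_sub (z.re + k) z.re
  nlinarith [mul_nonneg (abs_nonneg z.re) (norm_nonneg (z + k))]

lemma summable_inv_one_add_abs_intCast_sq : Summable fun k : ℤ ↦ ((1 + |(k : ℝ)|) ^ 2)⁻¹ := by
  have hnat : Summable fun n : ℕ ↦ ((1 + (n : ℝ)) ^ 2)⁻¹ := by
    simpa [add_comm] using (summable_nat_add_iff 1).2 (Real.summable_nat_pow_inv.2 one_lt_two)
  exact .of_nat_of_neg (by simpa using hnat) (by simpa using hnat)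

lemma exists_norm_eval_mul_bilateralWeight_le {p : Polynomial ℂ}
    (hp : p.natDegree + 3 ≤ 2 * Fintype.card ι) (R : ℝ) :
    ∃ C, 0 ≤ C ∧ ∀ a b : ι → ℂ, ‖a‖ ≤ R → ‖b‖ ≤ R → (∀ j, 3 ≤ (b j - a j).re) → ∀ (z : ℂ) (k : ℤ),
      ‖p.eval (z + k) * bilateralWeight a b z k‖ * (1 + |z.im|) ≤
        C * Real.exp (Real.pi * Fintype.card ι * |z.im|) * (1 + |z.re|) ^ 2 *
          ((1 + |(k : ℝ)|) ^ 2)⁻¹ := by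
  obtain ⟨Cp, hCp0, hCp⟩ := exists_norm_eval_le (le_refl p.natDegree)
  obtain ⟨C, hC0, hC⟩ := exists_norm_gammaKernelProd_mul_pow_le (ι := ι) 2 R
  refine ⟨Cp * C, by positivity, fun a b ha hb hab z k ↦ ?_⟩
  set w := z + k with hw
  have hkernel := hC a b ha hb (fun j ↦ le_of_eq_of_le (by norm_num) (hab j)) w
  have him : w.im = z.im := by simp [hw]
  have himw : 1 + |z.im| ≤ 1 + ‖w‖ := by gcongr; exact him ▸ abs_im_le_norm w
  have hone : 1 ≤ 1 + ‖w‖ := le_add_of_nonneg_right (norm_nonneg w)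
  rw [him] at hkernel
  rw [← div_eq_mul_inv, le_div_iff₀ (by positivity), norm_mul, norm_bilateralWeight, ← norm_prod,
    ← gammaKernelProd]
  calc ‖p.eval w‖ * ‖gammaKernelProd a b w‖ * (1 + |z.im|) * (1 + |(k : ℝ)|) ^ 2
      ≤ (Cp * (1 + ‖w‖) ^ p.natDegree) * ‖gammaKernelProd a b w‖ * (1 + ‖w‖) *
          ((1 + |z.re|) * (1 + ‖w‖)) ^ 2 := by
        gcongr
        · exact hCp w
        · exact one_add_abs_intCast_le z k
    _ = Cp * (‖gammaKernelProd a b w‖ * (1 + ‖w‖) ^ (p.natDegree + 3)) * (1 + |z.re|) ^ 2 := by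
        ring
    _ ≤ Cp * (‖gammaKernelProd a b w‖ * (1 + ‖w‖) ^ (2 * Fintype.card ι)) * (1 + |z.re|) ^ 2 := by
        gcongr
    _ ≤ Cp * (C * Real.exp (Real.pi * Fintype.card ι * |z.im|)) * (1 + |z.re|) ^ 2 := by gcongr
    _ = Cp * C * Real.exp (Real.pi * Fintype.card ι * |z.im|) * (1 + |z.re|) ^ 2 := by ring

end UniformBounds

section EntireBilateralSum

variable {ι : Type*} [Fintype ι] {a b : ι → ℂ} {p : Polynomial ℂ}

lemma differentiable_gammaKernel (a b : ℂ) : Differentiable ℂ (gammaKernel a b) := by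
  have hΓ := Complex.differentiable_one_div_Gamma
  exact (hΓ.comp (by fun_prop : Differentiable ℂ fun z ↦ 1 - a - z)).mul
    (hΓ.comp (by fun_prop : Differentiable ℂ fun z ↦ b + z))

lemma differentiable_bilateralWeight (a b : ι → ℂ) (k : ℤ) :
    Differentiable ℂ fun z ↦ bilateralWeight a b z k := by
  have hkernel (j : ι) : Differentiable ℂ fun z ↦ gammaKernel (a j) (b j) (z + k) :=
    (differentiable_gammaKernel (a j) (b j)).comp (by fun_prop)
  unfold bilateralWeight gammaKernelProd
  fun_prop

lemma differentiable_bilateralSum (hab : ∀ j, 3 ≤ (b j - a j).re)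
    (hp : p.natDegree + 3 ≤ 2 * Fintype.card ι) : Differentiable ℂ (bilateralSum a b p) := by
  obtain ⟨C, hC0, hC⟩ := exists_norm_eval_mul_bilateralWeight_le hp (max ‖a‖ ‖b‖)
  intro z
  set R := ‖z‖ + 1 with hR
  have hbound (k : ℤ) (w : ℂ) (hw : w ∈ Metric.ball 0 R) :
      ‖p.eval (w + k) * bilateralWeight a b w k‖ ≤
        C * Real.exp (Real.pi * Fintype.card ι * R) * (1 + R) ^ 2 * ((1 + |(k : ℝ)|) ^ 2)⁻¹ := by
    have hwR : ‖w‖ ≤ R := (mem_ball_zero_iff.1 hw).le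
    have hre := (abs_re_le_norm w).trans hwR
    have him := (abs_im_le_norm w).trans hwR
    calc _ ≤ ‖p.eval (w + k) * bilateralWeight a b w k‖ * (1 + |w.im|) :=
          le_mul_of_one_le_right (norm_nonneg _) (le_add_of_nonneg_right (abs_nonneg _))
      _ ≤ _ := hC a b (le_max_left _ _) (le_max_right _ _) hab w k
      _ ≤ _ := by gcongr
  have hterm (k : ℤ) : Differentiable ℂ fun w : ℂ ↦ p.eval (w + k) * bilateralWeight a b w k :=
    (p.differentiable.comp (by fun_prop : Differentiable ℂ fun w : ℂ ↦ w + k)).mul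
      (differentiable_bilateralWeight a b k)
  exact (differentiableOn_tsum_of_summable_norm
    (summable_inv_one_add_abs_intCast_sq.mul_left _) (fun k ↦ (hterm k).differentiableOn)
    Metric.isOpen_ball hbound).differentiableAt
      (Metric.isOpen_ball.mem_nhds (by simp [hR]))

lemma bilateralSum_add_one (a b : ι → ℂ) (p : Polynomial ℂ) (z : ℂ) :
    bilateralSum a b p (z + 1) = (-1) ^ Fintype.card ι * bilateralSum a b p z := by
  rw [bilateralSum, bilateralSum, ← tsum_mul_left, ← (Equiv.addRight (1 : ℤ)).tsum_eq fun k ↦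
    (-1) ^ Fintype.card ι * (p.eval (z + k) * bilateralWeight a b z k)]
  refine tsum_congr fun k ↦ ?_
  have hsign : ((-1 : ℂ) ^ Fintype.card ι) * (-1) ^ Fintype.card ι = 1 := by simp [← mul_pow]
  have hz : z + 1 + k = z + (k + 1) := by ring
  rw [Equiv.coe_addRight, bilateralWeight, bilateralWeight, zpow_add_one₀ (by simp), Int.cast_add,
    Int.cast_one, hz]
  linear_combination -(p.eval (z + (k + 1)) * ((-1) ^ Fintype.card ι) ^ k *
    gammaKernelProd a b (z + (k + 1))) * hsign

lemma exists_norm_bilateralSum_mul_le (hab : ∀ j, 3 ≤ (b j - a j).re)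
    (hp : p.natDegree + 3 ≤ 2 * Fintype.card ι) : ∃ C : ℝ, ∀ z,
      ‖bilateralSum a b p z‖ * (1 + |z.im|) ≤
        C * Real.exp (Real.pi * Fintype.card ι * |z.im|) := by
  obtain ⟨C, hC0, hC⟩ := exists_norm_eval_mul_bilateralWeight_le hp (max ‖a‖ ‖b‖)
  set S := ∑' k : ℤ, ((1 + |(k : ℝ)|) ^ 2)⁻¹
  have hstrip (z : ℂ) : ‖bilateralSum a b p z‖ * (1 + |z.im|) ≤
      C * Real.exp (Real.pi * Fintype.card ι * |z.im|) * (1 + |z.re|) ^ 2 * S := by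
    have hpos : 0 < 1 + |z.im| := by positivity
    rw [← le_div_iff₀ hpos, mul_div_right_comm]
    refine tsum_of_norm_bounded (summable_inv_one_add_abs_intCast_sq.hasSum.mul_left _) fun k ↦ ?_
    rw [div_mul_eq_mul_div, le_div_iff₀ hpos]
    exact hC a b (le_max_left _ _) (le_max_right _ _) hab z k
  have hper : Function.Periodic (fun z ↦ ‖bilateralSum a b p z‖) 1 := fun z ↦ by
    simp [bilateralSum_add_one]
  have hS0 : 0 ≤ S := tsum_nonneg fun _ ↦ by positivity
  refine ⟨C * (1 + 1) ^ 2 * S, fun z ↦ ?_⟩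
  have hfract := hstrip (z - ⌊z.re⌋ • (1 : ℂ))
  have hre : |(z - ⌊z.re⌋ • (1 : ℂ)).re| ≤ 1 := by
    simpa [abs_of_nonneg (Int.fract_nonneg z.re)] using (Int.fract_lt_one z.re).le
  have him : (z - ⌊z.re⌋ • (1 : ℂ)).im = z.im := by simp
  rw [hper.sub_zsmul_eq, him] at hfract
  calc _ ≤ _ := hfract
    _ ≤ C * Real.exp (Real.pi * Fintype.card ι * |z.im|) * (1 + 1) ^ 2 * S :=
        mul_le_mul_of_nonneg_right (by gcongr) hS0
    _ = _ := by ring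

end EntireBilateralSum

section TrigonometricPolynomials

variable {r : ℕ}

lemma qParam_one (z : ℂ) : Function.Periodic.qParam 1 z = cexp (2 * Real.pi * I * z) := by
  simp [Function.Periodic.qParam]

lemma cexp_pi_mul_I_mul_sub_one_mul_add_one (r : ℕ) (z : ℂ) :
    cexp (Real.pi * I * (r - 1) * (z + 1)) =
      (-1) ^ (r + 1) * cexp (Real.pi * I * (r - 1) * z) := by
  have hexponent : (Real.pi * I * (r - 1) * (z + 1) : ℂ) =
      (r + 1 : ℕ) * (Real.pi * I) + (Real.pi * I * (r - 1) * z - 2 * Real.pi * I) := by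
    push_cast; ring
  rw [hexponent, exp_add, exp_nat_mul, exp_pi_mul_I, exp_sub, exp_two_pi_mul_I, div_one]

lemma norm_cexp_pi_mul_I_mul_sub_one_mul (r : ℕ) (z : ℂ) :
    ‖cexp (Real.pi * I * (r - 1) * z)‖ = Real.exp (-(Real.pi * (r - 1) * z.im)) := by
  simp [norm_exp]

lemma tendsto_const_div_one_add_abs_im {l : Filter ℂ}
    (hl : Tendsto (fun z : ℂ ↦ |z.im|) l atTop) (C : ℝ) :
    Tendsto (fun z : ℂ ↦ C / (1 + |z.im|)) l (𝓝 0) :=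
  (tendsto_atTop_add_const_left _ 1 hl).const_div_atTop C

lemma exists_bilateralSum_eq_sum_cexp {a b : Fin (r + 1) → ℂ} (hab : ∀ j, 3 ≤ (b j - a j).re)
    {p : Polynomial ℂ} (hp : p.natDegree < r) : ∃ c : Fin r → ℂ, ∀ z, bilateralSum a b p z =
      cexp (-(Real.pi * I * (r - 1) * z)) *
        ∑ i, c i * cexp (2 * Real.pi * I * z) ^ (i : ℕ) := by
  have hp' : p.natDegree + 3 ≤ 2 * Fintype.card (Fin (r + 1)) := by
    rw [Fintype.card_fin]; lia
  obtain ⟨C, hC⟩ := exists_norm_bilateralSum_mul_le hab hp'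
  have hdecay (z : ℂ) : Real.exp (-(Real.pi * (r + 1) * |z.im|)) * ‖bilateralSum a b p z‖ ≤
      C / (1 + |z.im|) := by
    rw [le_div_iff₀ (by positivity), mul_assoc, Real.exp_neg, inv_mul_le_iff₀ (Real.exp_pos _)]
    simpa [mul_comm] using hC z
  set f : ℂ → ℂ := fun z ↦ cexp (Real.pi * I * (r - 1) * z) * bilateralSum a b p z with hf
  have hdiff : Differentiable ℂ f :=
    (by fun_prop : Differentiable ℂ fun z : ℂ ↦ cexp (Real.pi * I * (r - 1) * z)).mul
      (differentiable_bilateralSum hab hp')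
  have hper : Function.Periodic f (1 : ℝ) := fun z ↦ by
    simp only [hf, ofReal_one, bilateralSum_add_one, cexp_pi_mul_I_mul_sub_one_mul_add_one,
      Fintype.card_fin]
    rw [mul_mul_mul_comm, ← mul_pow, neg_one_mul, neg_neg, one_pow, one_mul]
  have htop : Tendsto (fun z ↦ f z * Function.Periodic.qParam 1 z) (comap im atTop) (𝓝 0) := by
    refine squeeze_zero_norm' ?_ (tendsto_const_div_one_add_abs_im
      (tendsto_abs_atTop_atTop.comp tendsto_comap) C)
    filter_upwards [tendsto_comap.eventually (eventually_ge_atTop 0)] with z hz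
    refine le_of_eq_of_le ?_ (hdecay z)
    rw [norm_mul, norm_mul, Function.Periodic.norm_qParam, norm_cexp_pi_mul_I_mul_sub_one_mul,
      mul_right_comm, ← Real.exp_add, abs_of_nonneg hz]
    ring_nf
  have hbot : Tendsto (fun z ↦ f z / Function.Periodic.qParam 1 z ^ r) (comap im atBot) (𝓝 0) := by
    refine squeeze_zero_norm' ?_ (tendsto_const_div_one_add_abs_im
      (tendsto_abs_atBot_atTop.comp tendsto_comap) C)
    filter_upwards [tendsto_comap.eventually (eventually_le_atBot 0)] with z hz
    refine le_of_eq_of_le ?_ (hdecay z)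
    rw [norm_div, norm_mul, norm_pow, Function.Periodic.norm_qParam,
      norm_cexp_pi_mul_I_mul_sub_one_mul, ← Real.exp_nat_mul, mul_div_right_comm, ← Real.exp_sub,
      abs_of_nonpos hz]
    ring_nf
  obtain ⟨c, hc⟩ := exists_eq_sum_qParam_pow_of_periodic one_pos hdiff hper r htop hbot
  refine ⟨c, fun z ↦ ?_⟩
  simp only [← qParam_one, ← hc, hf, exp_neg]
  rw [inv_mul_cancel_left₀ (exp_ne_zero _)]

/-- The product `∏_{i<j} sin (π (xᵢ - xⱼ))` up to a constant factor, in the form in which it arises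
in the evaluation of `multilateralSum`: a Vandermonde determinant times Gamma factors. -/
noncomputable def vandermondeGamma (x : Fin r → ℂ) : ℂ :=
  (Matrix.vandermonde x).det * ∏ i, ∏ j, (Gamma (1 + x j - x i))⁻¹

lemma cexp_two_pi_mul_I_sub_cexp (u v : ℂ) :
    cexp (-(Real.pi * I * u)) * cexp (-(Real.pi * I * v)) *
        (cexp (2 * Real.pi * I * v) - cexp (2 * Real.pi * I * u)) =
      2 * I * Complex.sin (Real.pi * (v - u)) := by
  have hsin := two_sin (Real.pi * (v - u))
  rw [mul_sub, ← exp_add, ← exp_add, ← exp_add]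
  have hv : (-(Real.pi * I * u) + -(Real.pi * I * v) + 2 * Real.pi * I * v : ℂ) =
      Real.pi * (v - u) * I := by ring
  have hu : (-(Real.pi * I * u) + -(Real.pi * I * v) + 2 * Real.pi * I * u : ℂ) =
      -(Real.pi * (v - u)) * I := by ring
  rw [hv, hu]
  linear_combination -I * hsin +
    (cexp (Real.pi * (v - u) * I) - cexp (-(Real.pi * (v - u)) * I)) * I_sq

lemma sub_mul_inv_Gamma_mul_inv_Gamma (u v : ℂ) :
    (v - u) * ((Gamma (1 + v - u))⁻¹ * (Gamma (1 + u - v))⁻¹) =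
      Complex.sin (Real.pi * (v - u)) / Real.pi := by
  have hreflect := Gamma_mul_Gamma_one_sub (v - u)
  have hstep := inv_Gamma_eq_mul_inv_Gamma_add_one (v - u)
  rw [← mul_assoc, add_sub_assoc, add_comm 1, ← hstep, ← mul_inv, ← inv_div, ← hreflect]
  ring_nf

lemma exists_vandermonde_cexp_eq (r : ℕ) : ∃ κ : ℂ, ∀ x : Fin r → ℂ,
    (∏ i, cexp (-(Real.pi * I * (r - 1) * x i))) *
        (Matrix.vandermonde fun i ↦ cexp (2 * Real.pi * I * x i)).det =
      κ * vandermondeGamma x := by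
  refine ⟨∏ i : Fin r, ∏ _j ∈ Ioi i, (2 * Real.pi * I), fun x ↦ ?_⟩
  have hexp : ∏ i, cexp (-(Real.pi * I * (r - 1) * x i)) =
      ∏ i, ∏ j ∈ Ioi i, (cexp (-(Real.pi * I * x i)) * cexp (-(Real.pi * I * x j))) := by
    rw [prod_prod_Ioi_mul_eq_prod_prod_off_diag fun _ i : Fin r ↦ cexp (-(Real.pi * I * x i))]
    refine prod_congr rfl fun i _ ↦ ?_
    rw [prod_const, card_compl, card_singleton, Fintype.card_fin, ← exp_nat_mul,
      Nat.cast_pred i.pos]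
    ring_nf
  have hGamma : ∏ i, ∏ j, (Gamma (1 + x j - x i))⁻¹ =
      ∏ i, ∏ j ∈ Ioi i, ((Gamma (1 + x j - x i))⁻¹ * (Gamma (1 + x i - x j))⁻¹) := by
    rw [prod_prod_Ioi_mul_eq_prod_prod_off_diag fun j i : Fin r ↦ (Gamma (1 + x j - x i))⁻¹]
    refine prod_congr rfl fun i _ ↦ ?_
    rw [← prod_mul_prod_compl {i}]
    simp
  rw [vandermondeGamma, hexp, hGamma, Matrix.det_vandermonde, Matrix.det_vandermonde]
  simp only [← prod_mul_distrib]
  refine prod_congr rfl fun i _ ↦ prod_congr rfl fun j _ ↦ ?_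
  rw [cexp_two_pi_mul_I_sub_cexp, sub_mul_inv_Gamma_mul_inv_Gamma]
  field [Real.pi_ne_zero]

lemma natCast_lt_re_parametricExcess {a b : Fin (r + 1) → ℂ} (hab : ∀ j, 3 ≤ (b j - a j).re) :
    (r : ℝ) < (parametricExcess a b).re := by
  have hsum : ∑ _j : Fin (r + 1), (3 : ℝ) ≤ (parametricExcess a b).re := by
    rw [parametricExcess, re_sum]
    exact sum_le_sum fun j _ ↦ hab j
  refine lt_of_lt_of_le ?_ hsum
  rw [sum_const, card_univ, Fintype.card_fin, nsmul_eq_mul]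
  push_cast
  linarith [(Nat.cast_nonneg r : (0 : ℝ) ≤ r)]

theorem exists_multilateralSum_eq_mul_vandermondeGamma {a b : Fin (r + 1) → ℂ}
    (hab : ∀ j, 3 ≤ (b j - a j).re) :
    ∃ D : ℂ, ∀ x : Fin r → ℂ, multilateralSum a b x = D * vandermondeGamma x := by
  have hS := natCast_lt_re_parametricExcess hab
  have htrig (m : Fin r) := exists_bilateralSum_eq_sum_cexp hab
    (p := .X ^ (m : ℕ)) (by simp)
  choose c hc using htrig
  obtain ⟨κ, hκ⟩ := exists_vandermonde_cexp_eq r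
  set M : Matrix (Fin r) (Fin r) ℂ := .of fun i m ↦ c m i with hM
  refine ⟨M.det * κ, fun x ↦ ?_⟩
  set V := Matrix.vandermonde fun i ↦ cexp (2 * Real.pi * I * x i) with hV
  rw [multilateralSum_eq_det (p := fun m ↦ .X ^ (m : ℕ)) (by simp)
    (fun m ↦ Polynomial.monic_X_pow _) hS x, mul_assoc, ← hκ]
  calc _ = (Matrix.of fun i m ↦ cexp (-(Real.pi * I * (r - 1) * x i)) * (V * M) i m).det := by
        congr 1
        ext i m
        simp [hc, hV, hM, Matrix.mul_apply, Matrix.vandermonde_apply, mul_comm]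
    _ = _ := by
        rw [Matrix.det_mul_column, Matrix.det_mul]
        ring

end TrigonometricPolynomials

section GammaRatios

lemma tendsto_prod_Gamma_add_natCast_div {ι : Type*} [Fintype ι] {s t : ι → ℂ}
    (hst : ∑ j, s j = ∑ j, t j) :
    Tendsto (fun N : ℕ ↦ (∏ j, Gamma (s j + N)) / ∏ j, Gamma (t j + N)) atTop (𝓝 1) := by
  have hlim := tendsto_finsetProd univ fun j _ ↦ tendsto_Gamma_add_natCast_div_Gamma (s j) (t j)
  rw [prod_const_one] at hlim
  refine hlim.congr' ?_
  filter_upwards [eventually_ne_atTop 0] with N hN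
  have hpow : ∏ j, (N : ℂ) ^ (t j - s j) = 1 := by
    simp only [cpow_def_of_ne_zero (Nat.cast_ne_zero.2 hN : (N : ℂ) ≠ 0)]
    rw [← exp_sum, ← mul_sum, sum_sub_distrib, hst, sub_self, mul_zero, exp_zero]
  rw [prod_mul_distrib, hpow, mul_one, prod_div_distrib]

lemma Gamma_mul_inv_Gamma_add_natCast {s : ℂ} (hs : 0 < s.re) (n : ℕ) :
    Gamma s * (Gamma (s + n))⁻¹ = ∏ l ∈ range n, (s + l)⁻¹ := by
  have hΓ := inv_Gamma_eq_prod_mul_inv_Gamma_add_natCast s n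
  have hΓ0 := Gamma_ne_zero_of_re_pos hs
  rw [prod_inv_distrib]
  refine eq_inv_of_mul_eq_one_left ?_
  rw [mul_assoc, mul_comm (Gamma (s + n))⁻¹, ← hΓ, mul_inv_cancel₀ hΓ0]

variable {σ : ℂ} (hσ : 0 < σ.re)

include hσ

lemma norm_add_natCast_le_norm_add_natCast_add (N l : ℕ) : ‖σ + l‖ ≤ ‖σ + N + l‖ := by
  rw [norm_def, norm_def, normSq_apply, normSq_apply]
  refine Real.sqrt_le_sqrt ?_
  simp only [add_re, add_im, natCast_re, natCast_im, add_zero]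
  gcongr
  all_goals linarith [(Nat.cast_nonneg N : (0 : ℝ) ≤ N)]

lemma norm_Gamma_mul_inv_Gamma_add_natCast_le (N n : ℕ) :
    ‖Gamma (σ + N) * (Gamma (σ + N + n))⁻¹‖ ≤ ‖Gamma σ * (Gamma (σ + n))⁻¹‖ := by
  have hσN : 0 < (σ + N).re := by
    rw [add_re, natCast_re]; positivity
  rw [Gamma_mul_inv_Gamma_add_natCast hσ, Gamma_mul_inv_Gamma_add_natCast hσN, norm_prod, norm_prod]
  refine prod_le_prod (fun _ _ ↦ norm_nonneg _) fun l _ ↦ ?_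
  have hl : σ + l ≠ 0 := fun h ↦ by
    have hre := congrArg re h
    rw [add_re, natCast_re, zero_re] at hre
    linarith [(Nat.cast_nonneg l : (0 : ℝ) ≤ l)]
  rw [norm_inv, norm_inv]
  exact inv_anti₀ (norm_pos_iff.2 hl) (norm_add_natCast_le_norm_add_natCast_add hσ N l)

lemma tendsto_Gamma_mul_inv_Gamma_add_natCast (n : ℕ) :
    Tendsto (fun N : ℕ ↦ Gamma (σ + N) * (Gamma (σ + N + n))⁻¹) atTop (𝓝 (0 ^ n)) := by
  have hfactor (l : ℕ) : Tendsto (fun N : ℕ ↦ (σ + N + l)⁻¹) atTop (𝓝 0) := by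
    refine tendsto_inv₀_cobounded.comp (tendsto_norm_atTop_iff_cobounded.1 ?_)
    refine tendsto_atTop_mono (fun N ↦ ?_) tendsto_natCast_atTop_atTop
    refine le_trans ?_ (re_le_norm _)
    rw [add_re, add_re, natCast_re, natCast_re]
    linarith [(Nat.cast_nonneg l : (0 : ℝ) ≤ l)]
  have hprod := tendsto_finsetProd (range n) fun l _ ↦ hfactor l
  rw [prod_const, card_range] at hprod
  refine hprod.congr fun N ↦ (Gamma_mul_inv_Gamma_add_natCast ?_ n).symm
  rw [add_re, natCast_re]
  positivity

lemma tendsto_tsum_mul_Gamma_mul_inv_Gamma {c : ℕ → ℂ}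
    (hc : Summable fun n : ℕ ↦ c n * (Gamma (σ + n))⁻¹) :
    Tendsto (fun N : ℕ ↦ Gamma (σ + N) * ∑' n : ℕ, c n * (Gamma (σ + N + n))⁻¹) atTop
      (𝓝 (c 0)) := by
  have hbound : Summable fun n : ℕ ↦ ‖c n * (Gamma σ * (Gamma (σ + n))⁻¹)‖ := by
    simpa only [mul_left_comm] using (hc.mul_left (Gamma σ)).norm
  have hlim := tendsto_tsum_of_dominated_convergence (𝓕 := atTop) hbound
    (fun n ↦ (tendsto_Gamma_mul_inv_Gamma_add_natCast hσ n).const_mul (c n))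
    (.of_forall fun N n ↦ by
      rw [norm_mul, norm_mul (c n)]
      gcongr
      exact norm_Gamma_mul_inv_Gamma_add_natCast_le hσ N n)
  rw [tsum_eq_single 0 fun n hn ↦ by rw [zero_pow hn, mul_zero], pow_zero, mul_one] at hlim
  refine hlim.congr fun N ↦ ?_
  simp only [← tsum_mul_left, mul_left_comm]

end GammaRatios

section LargeParameter

variable {r : ℕ} (a b : Fin (r + 1) → ℂ)

/-- The value of Gustafson's series with its dependence on the base point removed, see
`gustafson_Ar_2H2_general`. -/
noncomputable def gustafsonConst : ℂ :=
  Gamma (parametricExcess a b - r) * ∏ i, ∏ j, (Gamma (b i - a j))⁻¹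

variable {a b}

lemma lt_re_parametricExcess_add_natCast_single {c : ℝ} (hS : c < (parametricExcess a b).re)
    (j : Fin (r + 1)) (N : ℕ) : c < (parametricExcess a (b + Pi.single j (N : ℂ))).re := by
  rw [parametricExcess_add_single, add_re, natCast_re]
  exact lt_add_of_lt_of_nonneg hS N.cast_nonneg

lemma parametricExcess_sub_natCast_ne_zero (hS : (r : ℝ) < (parametricExcess a b).re) :
    parametricExcess a b - r ≠ 0 := sub_ne_zero.2 fun h ↦ hS.ne' (by rw [h, natCast_re])

lemma gustafsonConst_recurrence (hS : (r : ℝ) < (parametricExcess a b).re)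
    (j : Fin (r + 1)) :
    (parametricExcess a b - r) * gustafsonConst a b =
      (∏ i, (b j - a i)) * gustafsonConst a (b + Pi.single j 1) := by
  set b' := b + Pi.single j 1 with hb'
  have hrow : ∏ l, (Gamma (b j - a l))⁻¹ = (∏ l, (b j - a l)) * ∏ l, (Gamma (b' j - a l))⁻¹ := by
    rw [← prod_mul_distrib]
    refine prod_congr rfl fun l _ ↦ ?_
    rw [inv_Gamma_eq_mul_inv_Gamma_add_one, hb', Pi.add_apply, Pi.single_eq_same,
      add_sub_right_comm]
  have hother : ∏ i ∈ univ.erase j, ∏ l, (Gamma (b' i - a l))⁻¹ =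
      ∏ i ∈ univ.erase j, ∏ l, (Gamma (b i - a l))⁻¹ :=
    prod_congr rfl fun i hi ↦ by
      rw [hb', Pi.add_apply, Pi.single_eq_of_ne (ne_of_mem_erase hi), add_zero]
  rw [gustafsonConst, gustafsonConst, parametricExcess_add_single, add_sub_right_comm,
    Gamma_add_one _ (parametricExcess_sub_natCast_ne_zero hS),
    ← mul_prod_erase univ (fun i ↦ ∏ l, (Gamma (b i - a l))⁻¹) (mem_univ j),
    ← mul_prod_erase univ (fun i ↦ ∏ l, (Gamma (b' i - a l))⁻¹) (mem_univ j), hother, hrow]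
  ring

end LargeParameter

section UnilateralPoint

lemma bilateralSum_eq_tsum_natCast {ι : Type*} [Fintype ι] {b : ι → ℂ} {j : ι} {z : ℂ}
    (hz : b j + z = 1) (a : ι → ℂ) (p : Polynomial ℂ) :
    bilateralSum a b p z = ∑' n : ℕ, p.eval (z + (n : ℤ)) * bilateralWeight a b z n := by
  refine (Function.Injective.tsum_eq Nat.cast_injective fun k hk ↦ ?_).symm
  by_contra hneg
  obtain ⟨n, rfl⟩ : ∃ n : ℕ, k = -(n + 1) := ⟨(-k - 1).toNat, by
    have hk0 : ¬ 0 ≤ k := fun h ↦ hneg ⟨k.toNat, Int.toNat_of_nonneg h⟩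
    lia⟩
  have hpole : b j + (z + (-(n + 1) : ℤ)) = -n := by
    push_cast
    linear_combination hz
  have hkernel : gammaKernel (a j) (b j) (z + (-(n + 1) : ℤ)) = 0 := by
    rw [gammaKernel, hpole, Gamma_neg_nat_eq_zero, inv_zero, mul_zero]
  refine hk ?_
  beta_reduce
  rw [bilateralWeight, gammaKernelProd, prod_eq_zero (mem_univ j) hkernel, mul_zero, mul_zero]

variable {r : ℕ} (a b : Fin (r + 1) → ℂ)

/-- The part of `gammaKernelProd a b` that does not involve the last lower parameter. -/
noncomputable def truncatedKernel (z : ℂ) : ℂ :=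
  (∏ j, (Gamma (1 - a j - z))⁻¹) * ∏ i : Fin r, (Gamma (b i.castSucc + z))⁻¹

lemma gammaKernelProd_add_single_last (c z : ℂ) :
    gammaKernelProd a (b + Pi.single (Fin.last r) c) z =
      truncatedKernel a b z * (Gamma (b (Fin.last r) + c + z))⁻¹ := by
  simp only [gammaKernelProd, gammaKernel, prod_mul_distrib, truncatedKernel]
  rw [mul_assoc]
  congr 1
  rw [Fin.prod_univ_castSucc]
  simp [Fin.castSucc_ne_last]

lemma eval_mul_bilateralWeight_add_single_last (p : Polynomial ℂ) (c z : ℂ) (n : ℕ) :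
    p.eval (z + (n : ℤ)) * bilateralWeight a (b + Pi.single (Fin.last r) c) z n =
      p.eval (z + n) * ((-1) ^ (r + 1)) ^ n * truncatedKernel a b (z + n) *
        (Gamma (b (Fin.last r) + z + c + n))⁻¹ := by
  have harg : b (Fin.last r) + c + (z + n) = b (Fin.last r) + z + c + n := by ring
  rw [bilateralWeight, gammaKernelProd_add_single_last, Int.cast_natCast, zpow_natCast,
    Fintype.card_fin, harg]
  ring

variable {a b}

lemma tendsto_Gamma_mul_bilateralSum {p : Polynomial ℂ} (hp : p.natDegree < r)
    (hS : (r : ℝ) < (parametricExcess a b).re) {i : Fin r} {z : ℂ} (hz : b i.castSucc + z = 1)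
    (hσ : 0 < (b (Fin.last r) + z).re) :
    Tendsto (fun N : ℕ ↦ Gamma (b (Fin.last r) + z + N) *
        bilateralSum a (b + Pi.single (Fin.last r) (N : ℂ)) p z) atTop
      (𝓝 (p.eval z * truncatedKernel a b z)) := by
  have hsummable := (summable_eval_mul_bilateralWeight le_rfl
    (lt_of_le_of_lt (mod_cast hp) hS) z).comp_injective Nat.cast_injective
  have hcomp (n : ℕ) := eval_mul_bilateralWeight_add_single_last a b p 0 z n
  simp only [Pi.single_zero, add_zero] at hcomp
  have hlim := tendsto_tsum_mul_Gamma_mul_inv_Gamma hσ (hsummable.congr hcomp)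
  simp only [Nat.cast_zero, add_zero, pow_zero, mul_one] at hlim
  refine hlim.congr fun N ↦ ?_
  have hz' : (b + Pi.single (Fin.last r) (N : ℂ) : Fin (r + 1) → ℂ) i.castSucc + z = 1 := by
    rw [Pi.add_apply, Pi.single_eq_of_ne (Fin.castSucc_ne_last i), add_zero, hz]
  rw [bilateralSum_eq_tsum_natCast hz']
  simp only [eval_mul_bilateralWeight_add_single_last]

lemma tendsto_prod_Gamma_mul_multilateralSum (hS : (r : ℝ) < (parametricExcess a b).re)
    {x : Fin r → ℂ} (hx : ∀ i, b i.castSucc + x i = 1)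
    (hσ : ∀ i, 0 < (b (Fin.last r) + x i).re) :
    Tendsto (fun N : ℕ ↦ (∏ i, Gamma (b (Fin.last r) + x i + N)) *
        multilateralSum a (b + Pi.single (Fin.last r) (N : ℂ)) x) atTop
      (𝓝 ((∏ i, truncatedKernel a b (x i)) * (Matrix.vandermonde x).det)) := by
  have hentry : Tendsto (fun N : ℕ ↦ Matrix.of fun i m : Fin r ↦ Gamma (b (Fin.last r) + x i + N) *
      bilateralSum a (b + Pi.single (Fin.last r) (N : ℂ)) (.X ^ (m : ℕ)) (x i)) atTop
      (𝓝 (.of fun i m ↦ truncatedKernel a b (x i) * Matrix.vandermonde x i m)) :=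
    tendsto_pi_nhds.2 fun i ↦ tendsto_pi_nhds.2 fun m ↦ by
      have hrow := tendsto_Gamma_mul_bilateralSum (p := .X ^ (m : ℕ)) (by simp) hS (hx i) (hσ i)
      rw [Polynomial.eval_pow, Polynomial.eval_X, mul_comm] at hrow
      exact hrow
  have hdet := ((continuous_id.matrix_det).tendsto _).comp hentry
  rw [id, Matrix.det_mul_column] at hdet
  refine hdet.congr fun N ↦ ?_
  have hSN := lt_re_parametricExcess_add_natCast_single hS (Fin.last r) N
  rw [multilateralSum_eq_det (p := fun m ↦ .X ^ (m : ℕ)) (by simp)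
    (fun m ↦ Polynomial.monic_X_pow _) hSN x, ← Matrix.det_mul_column]
  rfl

lemma tendsto_prod_Gamma_mul_gustafsonConst {x : Fin r → ℂ} (hx : ∀ i, b i.castSucc + x i = 1) :
    Tendsto (fun N : ℕ ↦ (∏ i, Gamma (b (Fin.last r) + x i + N)) *
        gustafsonConst a (b + Pi.single (Fin.last r) (N : ℂ))) atTop
      (𝓝 (∏ i : Fin r, ∏ j, (Gamma (b i.castSucc - a j))⁻¹)) := by
  set s : Fin (r + 1) → ℂ := Fin.cons (parametricExcess a b - r) fun i ↦ b (Fin.last r) + x i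
  have hst : ∑ j, s j = ∑ j, (b (Fin.last r) - a j) := by
    have hx' (i : Fin r) : x i = 1 - b i.castSucc := eq_sub_of_add_eq' (hx i)
    simp only [s, Fin.sum_cons, hx', parametricExcess, sum_add_distrib, sum_sub_distrib, sum_const,
      card_univ, Fintype.card_fin, nsmul_eq_mul, Fin.sum_univ_castSucc b]
    push_cast
    ring
  have hratio := (tendsto_prod_Gamma_add_natCast_div hst).mul_const
    (∏ i : Fin r, ∏ j, (Gamma (b i.castSucc - a j))⁻¹)
  rw [one_mul] at hratio
  refine hratio.congr fun N ↦ ?_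
  have hnum : ∏ j, Gamma (s j + N) =
      Gamma (parametricExcess a b - r + N) * ∏ i, Gamma (b (Fin.last r) + x i + N) := by
    simp [s, Fin.prod_univ_succ]
  have hlast (j : Fin (r + 1)) : (b + Pi.single (Fin.last r) (N : ℂ) : Fin (r + 1) → ℂ)
      (Fin.last r) - a j = b (Fin.last r) - a j + N := by
    rw [Pi.add_apply, Pi.single_eq_same, add_sub_right_comm]
  have hcast (i : Fin r) :
      (b + Pi.single (Fin.last r) (N : ℂ) : Fin (r + 1) → ℂ) i.castSucc = b i.castSucc := by
    rw [Pi.add_apply, Pi.single_eq_of_ne (Fin.castSucc_ne_last i), add_zero]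
  rw [hnum, gustafsonConst, parametricExcess_add_single, add_sub_right_comm,
    Fin.prod_univ_castSucc fun i ↦ ∏ j, (Gamma (_ - a j))⁻¹]
  simp only [hlast, hcast, prod_inv_distrib]
  ring

lemma multilateralSum_mul_gustafsonConst_add_single (hS : (r : ℝ) < (parametricExcess a b).re)
    {j : Fin (r + 1)} (hj : ∀ i, 0 < (b j - a i).re) (x : Fin r → ℂ) (N : ℕ) :
    multilateralSum a b x * gustafsonConst a (b + Pi.single j (N : ℂ)) =
      multilateralSum a (b + Pi.single j (N : ℂ)) x * gustafsonConst a b := by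
  induction N with
  | zero => rw [Nat.cast_zero, Pi.single_zero, add_zero]
  | succ N ih =>
    set b' := b + Pi.single j (N : ℂ) with hb'
    have hsucc : b + Pi.single j ((N + 1 : ℕ) : ℂ) = b' + Pi.single j 1 := by
      rw [hb', add_assoc, ← Pi.single_add, Nat.cast_succ]
    have hS' : (r : ℝ) < (parametricExcess a b').re :=
      lt_re_parametricExcess_add_natCast_single hS j N
    have hprod : ∏ i, (b' j - a i) ≠ 0 := prod_ne_zero_iff.2 fun i _ h ↦ by
      have hre := congrArg re h
      rw [hb', Pi.add_apply, Pi.single_eq_same, add_sub_right_comm, add_re, natCast_re,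
        zero_re] at hre
      linarith [hj i, (Nat.cast_nonneg N : (0 : ℝ) ≤ N)]
    rw [hsucc]
    refine mul_left_cancel₀ hprod ?_
    linear_combination (parametricExcess a b' - r) * ih -
      multilateralSum a b x * gustafsonConst_recurrence hS' j +
      gustafsonConst a b * multilateralSum_recurrence hS' j x

lemma prod_truncatedKernel_mul_det_vandermonde {x : Fin r → ℂ}
    (hx : ∀ i, b i.castSucc + x i = 1) :
    (∏ i, truncatedKernel a b (x i)) * (Matrix.vandermonde x).det =
      (∏ i : Fin r, ∏ j, (Gamma (b i.castSucc - a j))⁻¹) * vandermondeGamma x := by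
  have hb (i : Fin r) : b i.castSucc = 1 - x i := eq_sub_of_add_eq (hx i)
  have hcomm (i : Fin r) (j : Fin (r + 1)) : 1 - x i - a j = 1 - a j - x i := sub_right_comm ..
  simp only [truncatedKernel, vandermondeGamma, prod_mul_distrib, hb, hcomm, sub_add_eq_add_sub]
  rw [prod_comm (f := fun i j ↦ (Gamma (1 + x i - x j))⁻¹)]
  ring

theorem multilateralSum_eq_of_add_eq_one (hS : (r : ℝ) < (parametricExcess a b).re)
    (hba : ∀ i j, 0 < (b i - a j).re) {x : Fin r → ℂ} (hx : ∀ i, b i.castSucc + x i = 1)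
    (hσ : ∀ i, 0 < (b (Fin.last r) + x i).re) :
    multilateralSum a b x = gustafsonConst a b * vandermondeGamma x := by
  have hsum := (tendsto_prod_Gamma_mul_multilateralSum (a := a) hS hx hσ).mul_const
    (gustafsonConst a b)
  have hconst := (tendsto_prod_Gamma_mul_gustafsonConst (a := a) hx).const_mul
    (multilateralSum a b x)
  have hlim := tendsto_nhds_unique (hconst.congr fun N ↦ by
    rw [mul_left_comm, multilateralSum_mul_gustafsonConst_add_single hS (hba _), ← mul_assoc]) hsum
  have hL : ∏ i : Fin r, ∏ j, (Gamma (b i.castSucc - a j))⁻¹ ≠ 0 :=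
    prod_ne_zero_iff.2 fun i _ ↦ prod_ne_zero_iff.2 fun j _ ↦
      inv_ne_zero (Gamma_ne_zero_of_re_pos (hba i.castSucc j))
  rw [prod_truncatedKernel_mul_det_vandermonde hx] at hlim
  refine mul_right_cancel₀ hL (hlim.trans ?_)
  ring

end UnilateralPoint

section Perturbation

variable {r : ℕ}

lemma vandermondeGamma_ne_zero {x : Fin r → ℂ}
    (hx : ∀ i j, i ≠ j → ∀ m : ℤ, x i - x j ≠ m) : vandermondeGamma x ≠ 0 := by
  have hinj : Function.Injective x := fun i j hij ↦ by
    by_contra hne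
    exact hx i j hne 0 (by rw [hij, sub_self, Int.cast_zero])
  refine mul_ne_zero (Matrix.det_vandermonde_ne_zero_iff.2 hinj) (prod_ne_zero_iff.2 fun i _ ↦
    prod_ne_zero_iff.2 fun j _ ↦ inv_ne_zero ?_)
  rcases eq_or_ne j i with rfl | hne
  · simp
  · refine Gamma_ne_zero fun m hm ↦ hx j i hne (-m - 1) ?_
    push_cast
    linear_combination hm

theorem multilateralSum_eq_of_forall_sub_ne {a b : Fin (r + 1) → ℂ}
    (hba : ∀ i j, 3 ≤ (b i - a j).re) (hlast : ∀ i : Fin r, 0 ≤ (b (Fin.last r) - b i.castSucc).re)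
    (hb : ∀ i j : Fin r, i ≠ j → ∀ m : ℤ, b i.castSucc - b j.castSucc ≠ m) (x : Fin r → ℂ) :
    multilateralSum a b x = gustafsonConst a b * vandermondeGamma x := by
  obtain ⟨D, hD⟩ := exists_multilateralSum_eq_mul_vandermondeGamma fun j ↦ hba j j
  set x₀ : Fin r → ℂ := fun i ↦ 1 - b i.castSucc with hx₀
  have heval : multilateralSum a b x₀ = gustafsonConst a b * vandermondeGamma x₀ := by
    refine multilateralSum_eq_of_add_eq_one (natCast_lt_re_parametricExcess fun j ↦ hba j j)
      (fun i j ↦ three_pos.trans_le (hba i j)) (fun i ↦ by simp [hx₀]) fun i ↦ ?_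
    have hi := hlast i
    simp only [hx₀, add_re, sub_re, one_re] at hi ⊢
    linarith
  have hne : vandermondeGamma x₀ ≠ 0 := vandermondeGamma_ne_zero fun i j hij m h ↦
    hb j i hij.symm m (by linear_combination h)
  rw [hD, mul_right_cancel₀ hne ((hD x₀).symm.trans heval)]

lemma continuous_bilateralWeight {ι : Type*} [Fintype ι] (a : ι → ℂ) (z : ℂ) (k : ℤ) :
    Continuous fun b ↦ bilateralWeight a b z k := by
  have hkernel (j : ι) : Continuous fun b : ι → ℂ ↦ gammaKernel (a j) (b j) (z + k) :=
    continuous_gammaKernel.comp (f := fun b : ι → ℂ ↦ (a j, b j, z + k)) (by fun_prop)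
  unfold bilateralWeight gammaKernelProd
  fun_prop

lemma continuousOn_bilateralSum {ι : Type*} [Fintype ι] (a : ι → ℂ) {p : Polynomial ℂ}
    (hp : p.natDegree + 3 ≤ 2 * Fintype.card ι) (z : ℂ) :
    ContinuousOn (fun b ↦ bilateralSum a b p z) {b | ∀ j, 3 ≤ (b j - a j).re} := by
  refine continuousOn_of_locally_continuousOn fun b₀ _ ↦
    ⟨Metric.ball 0 (‖b₀‖ + 1), Metric.isOpen_ball, by simp, ?_⟩
  obtain ⟨C, -, hC⟩ := exists_norm_eval_mul_bilateralWeight_le hp (max ‖a‖ (‖b₀‖ + 1))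
  have hterm (k : ℤ) : Continuous fun b ↦ p.eval (z + k) * bilateralWeight a b z k :=
    continuous_const.mul (continuous_bilateralWeight a z k)
  refine continuousOn_tsum (fun k ↦ (hterm k).continuousOn)
    (summable_inv_one_add_abs_intCast_sq.mul_left
      (C * Real.exp (Real.pi * Fintype.card ι * |z.im|) * (1 + |z.re|) ^ 2))
    fun k b ⟨hab, hb⟩ ↦ ?_
  have hbR : ‖b‖ ≤ max ‖a‖ (‖b₀‖ + 1) := (mem_ball_zero_iff.1 hb).le.trans (le_max_right _ _)
  exact (le_mul_of_one_le_right (norm_nonneg _) (le_add_of_nonneg_right (abs_nonneg _))).trans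
    (hC a b (le_max_left _ _) hbR hab z k)

lemma continuousOn_multilateralSum (a : Fin (r + 1) → ℂ) (x : Fin r → ℂ) :
    ContinuousOn (fun b ↦ multilateralSum a b x) {b | ∀ j, 3 ≤ (b j - a j).re} := by
  refine ContinuousOn.congr (f := fun b ↦
    (Matrix.of fun i m : Fin r ↦ bilateralSum a b (.X ^ (m : ℕ)) (x i)).det) ?_ fun b hb ↦
      multilateralSum_eq_det (by simp) (fun m ↦ Polynomial.monic_X_pow _)
        (natCast_lt_re_parametricExcess hb) x
  refine continuous_id.matrix_det.comp_continuousOn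
    (continuousOn_pi.2 fun i ↦ continuousOn_pi.2 fun m ↦ continuousOn_bilateralSum a ?_ (x i))
  rw [Polynomial.natDegree_X_pow, Fintype.card_fin]
  lia

lemma continuousOn_gustafsonConst (a : Fin (r + 1) → ℂ) :
    ContinuousOn (gustafsonConst a) {b | (r : ℝ) < (parametricExcess a b).re} := by
  intro b hb
  have hpole (m : ℕ) : parametricExcess a b - r ≠ -m := fun h ↦ by
    have hre := congrArg re h
    rw [sub_re, neg_re, natCast_re, natCast_re] at hre
    linarith [Set.mem_ofPred_eq ▸ hb, (Nat.cast_nonneg m : (0 : ℝ) ≤ m)]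
  have hGamma : ContinuousAt Gamma (parametricExcess a b - r) :=
    (differentiableAt_Gamma _ hpole).continuousAt
  have hexcess : Continuous fun b ↦ parametricExcess a b - r := by
    unfold parametricExcess
    fun_prop
  have hprod : Continuous fun b : Fin (r + 1) → ℂ ↦ ∏ i, ∏ j, (Gamma (b i - a j))⁻¹ :=
    continuous_finsetProd _ fun i _ ↦ continuous_finsetProd _ fun j _ ↦
      continuous_inv_Gamma.comp (by fun_prop)
  exact ((hGamma.comp (f := fun b ↦ parametricExcess a b - r) hexcess.continuousAt).mul
    hprod.continuousAt).continuousWithinAt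

lemma eventually_forall_add_mul_sub_ne_intCast (c : Fin r → ℂ) :
    ∀ᶠ t : ℝ in 𝓝[≠] 0, ∀ i j : Fin r, i ≠ j → ∀ m : ℤ,
      c i + I * t * (i : ℕ) - (c j + I * t * (j : ℕ)) ≠ m := by
  refine eventually_all.2 fun i ↦ eventually_all.2 fun j ↦ ?_
  filter_upwards [nhdsNE_le_cofinite _ (eventually_cofinite_ne
    ((c j - c i).im / ((i : ℕ) - (j : ℕ) : ℝ)))] with t ht hij m h
  have hsub : ((i : ℕ) - (j : ℕ) : ℝ) ≠ 0 :=
    sub_ne_zero.2 (Nat.cast_injective.ne (Fin.val_injective.ne hij))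
  have him := congrArg im h
  simp only [sub_im, add_im, mul_im, mul_re, I_re, I_im, ofReal_re, ofReal_im, natCast_re,
    natCast_im, intCast_im] at him
  refine ht ((eq_div_iff hsub).2 ?_)
  rw [sub_im]
  linarith

theorem multilateralSum_eq_of_three_le {a b : Fin (r + 1) → ℂ} (hba : ∀ i j, 3 ≤ (b i - a j).re)
    (hlast : ∀ i : Fin r, 0 ≤ (b (Fin.last r) - b i.castSucc).re) (x : Fin r → ℂ) :
    multilateralSum a b x = gustafsonConst a b * vandermondeGamma x := by
  set β : ℝ → Fin (r + 1) → ℂ := fun t j ↦ b j + I * t * (j : ℕ) with hβ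
  have hβ_cont : Continuous β := by fun_prop
  have hβ_zero : β 0 = b := by simp [hβ]
  have hβ_re (t : ℝ) (j : Fin (r + 1)) : (β t j).re = (b j).re := by simp [hβ]
  have hβ_sub (t : ℝ) (j : Fin (r + 1)) : 3 ≤ (β t j - a j).re := by
    simpa only [sub_re, hβ_re] using hba j j
  have hsum : Continuous fun t ↦ multilateralSum a (β t) x :=
    (continuousOn_multilateralSum a x).comp_continuous hβ_cont hβ_sub
  have hconst : Continuous fun t ↦ gustafsonConst a (β t) * vandermondeGamma x :=
    ((continuousOn_gustafsonConst a).comp_continuous hβ_cont fun t ↦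
      natCast_lt_re_parametricExcess (hβ_sub t)).mul_const _
  have hgeneric : ∀ᶠ t in 𝓝[≠] 0,
      multilateralSum a (β t) x = gustafsonConst a (β t) * vandermondeGamma x := by
    filter_upwards [eventually_forall_add_mul_sub_ne_intCast fun i ↦ b i.castSucc] with t ht
    refine multilateralSum_eq_of_forall_sub_ne (fun i j ↦ ?_) (fun i ↦ ?_) ht x
    · simpa only [sub_re, hβ_re] using hba i j
    · simpa only [sub_re, hβ_re] using hlast i
  have hlim := tendsto_nhds_unique_of_eventuallyEq (hsum.continuousAt.mono_left nhdsWithin_le_nhds)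
    (hconst.continuousAt.mono_left nhdsWithin_le_nhds) hgeneric
  beta_reduce at hlim
  rwa [hβ_zero] at hlim

end Perturbation

section Descent

variable {r : ℕ} {a b : Fin (r + 1) → ℂ} {x : Fin r → ℂ}

lemma multilateralSum_eq_of_add_single (hS : (r : ℝ) < (parametricExcess a b).re)
    {j : Fin (r + 1)} (h : multilateralSum a (b + Pi.single j 1) x =
      gustafsonConst a (b + Pi.single j 1) * vandermondeGamma x) :
    multilateralSum a b x = gustafsonConst a b * vandermondeGamma x := by
  refine mul_left_cancel₀ (parametricExcess_sub_natCast_ne_zero hS) ?_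
  rw [multilateralSum_recurrence hS j, h, ← mul_assoc, ← mul_assoc, gustafsonConst_recurrence hS j]

lemma multilateralSum_eq_of_add_natCast_single (hS : (r : ℝ) < (parametricExcess a b).re)
    (j : Fin (r + 1)) (N : ℕ) (h : multilateralSum a (b + Pi.single j (N : ℂ)) x =
      gustafsonConst a (b + Pi.single j (N : ℂ)) * vandermondeGamma x) :
    multilateralSum a b x = gustafsonConst a b * vandermondeGamma x := by
  induction N with
  | zero => simpa using h
  | succ N ih =>
    refine ih (multilateralSum_eq_of_add_single (j := j)
      (lt_re_parametricExcess_add_natCast_single hS j N) ?_)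
    rwa [add_assoc, ← Pi.single_add, ← Nat.cast_succ]

lemma multilateralSum_eq_of_add_natCast (hS : (r : ℝ) < (parametricExcess a b).re)
    (N : Fin (r + 1) → ℕ) (h : multilateralSum a (b + fun j ↦ (N j : ℂ)) x =
      gustafsonConst a (b + fun j ↦ (N j : ℂ)) * vandermondeGamma x) :
    multilateralSum a b x = gustafsonConst a b * vandermondeGamma x := by
  have hN : (fun j ↦ (N j : ℂ)) = ∑ j, Pi.single j (N j : ℂ) :=
    (univ_sum_single fun j ↦ (N j : ℂ)).symm
  rw [hN] at h
  generalize (univ : Finset (Fin (r + 1))) = s at h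
  induction s using Finset.cons_induction generalizing b with
  | empty => simpa using h
  | cons j s hj ih =>
    refine multilateralSum_eq_of_add_natCast_single hS j (N j)
      (ih (lt_re_parametricExcess_add_natCast_single hS j (N j)) ?_)
    rwa [add_assoc, ← sum_cons hj (f := fun j ↦ Pi.single j (N j : ℂ))]

theorem gustafson_Ar_2H2_general (a b : Fin (r + 1) → ℂ)
    (hS : (r : ℝ) < (parametricExcess a b).re) (x : Fin r → ℂ) :
    (Summable fun k ↦ ‖multilateralTerm a b x k‖) ∧
      ∑' k, multilateralTerm a b x k = gustafsonConst a b * vandermondeGamma x := by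
  refine ⟨summable_norm_multilateralTerm hS x, ?_⟩
  obtain ⟨M, hM⟩ := Finite.exists_le fun p : Fin (r + 1) × Fin (r + 1) ↦
    ⌈3 - (b p.1 - a p.2).re⌉₊
  obtain ⟨L, hL⟩ := Finite.exists_le fun i : Fin r ↦ ⌈(b i.castSucc - b (Fin.last r)).re⌉₊
  refine multilateralSum_eq_of_add_natCast hS (fun j ↦ M + (Pi.single (Fin.last r) L :
    Fin (r + 1) → ℕ) j) (multilateralSum_eq_of_three_le (fun i j ↦ ?_) (fun i ↦ ?_) x)
  · have hij := Nat.ceil_le.1 (hM (i, j))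
    simp only [Pi.add_apply, add_re, sub_re, natCast_re, Nat.cast_add] at hij ⊢
    linarith [(Nat.cast_nonneg ((Pi.single (Fin.last r) L : Fin (r + 1) → ℕ) i) :
      (0 : ℝ) ≤ _)]
  · have hi := Nat.ceil_le.1 (hL i)
    simp only [Pi.add_apply, add_re, sub_re, natCast_re, Nat.cast_add, Pi.single_eq_same,
      Pi.single_eq_of_ne (Fin.castSucc_ne_last i), Nat.cast_zero, zero_re] at hi ⊢
    linarith

end Descent

section ShiftedFactorial

lemma inv_poch_eq_Gamma_mul_inv_Gamma_add {c : ℂ} (hc : Gamma c ≠ 0) (k : ℤ) :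
    (poch c k)⁻¹ = Gamma c * (Gamma (c + k))⁻¹ := by
  rw [poch]
  split_ifs with hk
  · lift k to ℕ using hk
    rw [Int.toNat_natCast, Int.cast_natCast]
    refine (eq_inv_of_mul_eq_one_left ?_).symm
    rw [mul_assoc, mul_comm _ (∏ _ ∈ _, _), ← inv_Gamma_eq_prod_mul_inv_Gamma_add_natCast,
      mul_inv_cancel₀ hc]
  · obtain ⟨n, rfl⟩ : ∃ n : ℕ, k = -n := ⟨(-k).toNat, by lia⟩
    have hshift := inv_Gamma_eq_prod_mul_inv_Gamma_add_natCast (c - n) n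
    rw [sub_add_cancel] at hshift
    rw [neg_neg, Int.toNat_natCast, inv_inv, Int.cast_neg, Int.cast_natCast, ← sub_eq_add_neg,
      hshift, mul_left_comm, mul_inv_cancel₀ hc, mul_one, ← prod_range_reflect]
    refine prod_congr rfl fun l hl ↦ ?_
    rw [Nat.sub_sub, Nat.cast_sub (by grind)]
    push_cast
    ring

lemma inv_poch_one_sub_neg (c : ℂ) (k : ℤ) : (poch (1 - c) (-k))⁻¹ = (-1) ^ k * poch c k := by
  have hflip (f g : ℕ → ℂ) (hfg : ∀ j, f j = -g j) (n : ℕ) :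
      ∏ j ∈ range n, f j = (-1) ^ n * ∏ j ∈ range n, g j := by
    simp only [hfg, prod_neg, card_range]
  rcases k.eq_nat_or_neg with ⟨n, rfl | rfl⟩
  · rcases n.eq_zero_or_pos with rfl | hn
    · simp [poch]
    · rw [poch, poch, if_neg (by lia), if_pos (by lia), inv_inv, neg_neg, Int.toNat_natCast,
        zpow_natCast, hflip _ (fun j ↦ c + j) (fun j ↦ by ring)]
  · rcases n.eq_zero_or_pos with rfl | hn
    · simp [poch]
    · rw [poch, poch, if_pos (by lia), if_neg (by lia), neg_neg, Int.toNat_natCast, zpow_neg,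
        zpow_natCast, hflip _ (fun j ↦ c - 1 - j) (fun j ↦ by ring), mul_inv]

lemma poch_eq_mul_Gamma_one_sub {c : ℂ} (hc : Gamma (1 - c) ≠ 0) (k : ℤ) :
    poch c k = (-1) ^ k * (Gamma (1 - c) * (Gamma (1 - c - k))⁻¹) := by
  have hsign : ((-1 : ℂ) ^ k) * (-1) ^ k = 1 := by simp [← mul_zpow]
  have hreflect := inv_poch_eq_Gamma_mul_inv_Gamma_add hc (-k)
  rw [inv_poch_one_sub_neg, Int.cast_neg, ← sub_eq_add_neg] at hreflect
  rw [← hreflect, ← mul_assoc, hsign, one_mul]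

variable {r : ℕ}

lemma prod_sub_div_sub_eq_det_vandermonde_div (x y : Fin r → ℂ) :
    (∏ i, ∏ j, if i < j then (y i - y j) / (x i - x j) else 1) =
      (Matrix.vandermonde y).det / (Matrix.vandermonde x).det := by
  rw [Matrix.det_vandermonde, Matrix.det_vandermonde, ← prod_div_distrib]
  refine prod_congr rfl fun i _ ↦ ?_
  rw [← prod_div_distrib, ← prod_filter, filter_lt_eq_Ioi]
  refine prod_congr rfl fun j _ ↦ ?_
  rw [← neg_sub (y i), ← neg_sub (x i), neg_div_neg_eq]

lemma poch_div_poch_eq_mul_bilateralWeight {a b : Fin (r + 1) → ℂ} {z : ℂ}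
    (ha : ∀ j, Gamma (1 - a j - z) ≠ 0) (hb : ∀ j, Gamma (b j + z) ≠ 0) (k : ℤ) :
    ∏ j, poch (a j + z) k / poch (b j + z) k =
      (∏ j, Gamma (1 - a j - z) * Gamma (b j + z)) * bilateralWeight a b z k := by
  have hsign : ((-1 : ℂ) ^ Fintype.card (Fin (r + 1))) ^ k = ∏ _j : Fin (r + 1), (-1 : ℂ) ^ k := by
    rw [prod_const, card_univ, ← zpow_natCast, ← zpow_natCast, ← zpow_mul, ← zpow_mul, mul_comm]
  rw [bilateralWeight, gammaKernelProd, hsign, ← prod_mul_distrib, ← prod_mul_distrib]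
  refine prod_congr rfl fun j _ ↦ ?_
  rw [div_eq_mul_inv, inv_poch_eq_Gamma_mul_inv_Gamma_add (hb j),
    poch_eq_mul_Gamma_one_sub (by rw [← sub_sub]; exact ha j), gammaKernel]
  simp only [sub_sub, add_assoc]
  ring

lemma summand_eq_mul_multilateralTerm {a b : Fin (r + 1) → ℂ} {x : Fin r → ℂ}
    (ha : ∀ i j, Gamma (1 - a j - x i) ≠ 0) (hb : ∀ i j, Gamma (b j + x i) ≠ 0) (k : Fin r → ℤ) :
    (∏ i, ∏ j, if i < j then (x i + k i - x j - k j) / (x i - x j) else 1) *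
        ∏ i, ∏ j, poch (a j + x i) (k i) / poch (b j + x i) (k i) =
      (∏ i, ∏ j, Gamma (1 - a j - x i) * Gamma (b j + x i)) / (Matrix.vandermonde x).det *
        multilateralTerm a b x k := by
  have hratio := prod_sub_div_sub_eq_det_vandermonde_div x fun i ↦ x i + k i
  simp only [← sub_sub] at hratio
  simp only [hratio, poch_div_poch_eq_mul_bilateralWeight (ha _) (hb _), prod_mul_distrib,
    multilateralTerm]
  ring

end ShiftedFactorial

/-- Gustafson's `A_r` extension of Dougall's `₂H₂` summation. -/
theorem gustafson_Ar_2H2 (r : ℕ) (hr : 1 ≤ r)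
    (a b : Fin (r + 1) → ℂ) (x : Fin r → ℂ)
    (hx : ∀ i j : Fin r, i ≠ j → ∀ m : ℤ, x i - x j ≠ (m : ℂ))
    (hg1 : ∀ (i : Fin r) (j : Fin (r + 1)) (m : ℕ), 1 - a j - x i ≠ -(m : ℂ))
    (hg2 : ∀ (i : Fin r) (j : Fin (r + 1)) (m : ℕ), b j + x i ≠ -(m : ℂ))
    (hg3 : ∀ (i j : Fin (r + 1)) (m : ℕ), b j - a i ≠ -(m : ℂ))
    (hden : ∀ (i : Fin r) (j : Fin (r + 1)) (m : ℤ), poch (b j + x i) m ≠ 0)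
    (hre : 0 < ((-(r : ℂ) + ∑ j, (b j - a j)).re)) :
    (Summable fun k : Fin r → ℤ =>
      ‖(∏ i : Fin r, ∏ j : Fin r,
          if i < j then (x i + k i - x j - (k j : ℂ)) / (x i - x j) else 1) *
        ∏ i : Fin r, ∏ j : Fin (r + 1), poch (a j + x i) (k i) / poch (b j + x i) (k i)‖) ∧
    (∑' k : Fin r → ℤ,
      (∏ i : Fin r, ∏ j : Fin r,
          if i < j then (x i + k i - x j - (k j : ℂ)) / (x i - x j) else 1) *
        ∏ i : Fin r, ∏ j : Fin (r + 1), poch (a j + x i) (k i) / poch (b j + x i) (k i)) =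
      Complex.Gamma (-(r : ℂ) + ∑ j, (b j - a j)) *
        (∏ i : Fin r, ∏ j : Fin (r + 1),
          Complex.Gamma (1 - a j - x i) * Complex.Gamma (b j + x i)) /
        ((∏ i : Fin (r + 1), ∏ j : Fin (r + 1), Complex.Gamma (b j - a i)) *
          ∏ i : Fin r, ∏ j : Fin r, Complex.Gamma (1 + x j - x i)) := by
  have hS : (r : ℝ) < (parametricExcess a b).re := by
    simpa [parametricExcess] using hre
  obtain ⟨hsummable, hsum⟩ := gustafson_Ar_2H2_general a b hS x
  simp only [summand_eq_mul_multilateralTerm (fun i j ↦ Gamma_ne_zero (hg1 i j))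
    fun i j ↦ Gamma_ne_zero (hg2 i j), norm_mul, tsum_mul_left, hsum]
  refine ⟨hsummable.mul_left _, ?_⟩
  have hdet := left_ne_zero_of_mul (vandermondeGamma_ne_zero hx)
  rw [gustafsonConst, vandermondeGamma, neg_add_eq_sub, ← parametricExcess,
    prod_comm (f := fun i j ↦ Gamma (b j - a i))]
  simp only [prod_inv_distrib]
  field_simp
end

section
/- (A_r Pfaff–Saalschütz summation.) Let r ≥ 1, let M be a non-negative integer, and let a_1,…,a_r, b, c, x_1,…,x_r ∈ ℂ be generic (no denominator vanishing, with x_i−x_j ∉ ℤ for i≠j). Then Σ over all k = (k_1,…,k_r) with k_i ≥ 0 and |k| ≤ M of [ ∏_{1≤i<j≤r} ((x_i+k_i−x_j−k_j)/(x_i−x_j)) · ∏_{i,j=1}^r ((a_j+x_i−x_j)_{k_i}/(1+x_i−x_j)_{k_i}) · ∏_{i=1}^r ((b+x_i)_{k_i}/(c+x_i)_{k_i}) · ((−M)_{|k|}/(a_1+⋯+a_r+b+1−M−c)_{|k|}) ] = ((c−b)_M/(c−a_1−⋯−a_r−b)_M) · ∏_{i=1}^r ((c+x_i−a_i)_M/(c+x_i)_M).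 -/
open Complex

/-!
Write `u c k` for the summand without its `M`-dependent factor and `z = c - ∑ a - b`. Since
`(-M)_n / (1 - M - z)_n = M (M - 1) ⋯ (M - n + 1) (z)_{M - n} / (z)_M`, the claim evaluates
`∑ u c k * M (M - 1) ⋯ (M - |k| + 1) (z)_{M - |k|}`, and it goes by induction on `M`, passing from
`c + 1` to `c`. The right-hand side then acquires the factor
`(c - b) ∏ (c + x_j - a_j) / (c + x_j)`. Multiplied by `u (c + 1) k`, this factor becomes
`(c - b) ∏ (c + x_j - a_j) / (c + x_j + k_j)` times `u c k`, whose partial fraction expansion at the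
nodes `x_i + k_i` turns it into a combination of `u c k` and the neighbours `u c (k + e_i)`.
Collecting the coefficient of each `u c k`, a second partial fraction identity sums the
contributions of its lower neighbours to `|k|`.
-/

open Finset Polynomial

section PartialFractions

variable {K ι : Type*} [Field K] [DecidableEq ι] {s : Finset ι} {y : ι → K}

theorem sum_prod_sub_div_prod_erase_sub (u : ι → K) (hy : Set.InjOn y s) :
    ∑ i ∈ s, (∏ j ∈ s, (y i - u j)) / ∏ j ∈ s.erase i, (y i - y j) = ∑ j ∈ s, (y j - u j) := by
  rcases s.eq_empty_or_nonempty with rfl | hs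
  · simp
  have hdeg : (Lagrange.nodal s u - Lagrange.nodal s y).degree < #s := by
    rw [← Lagrange.degree_nodal (s := s) (v := u)]
    refine degree_sub_lt_left (by simp only [Lagrange.degree_nodal]) Lagrange.nodal_ne_zero ?_
    rw [Lagrange.nodal_monic.leadingCoeff, Lagrange.nodal_monic.leadingCoeff]
  have hcoeff : (Lagrange.nodal s u - Lagrange.nodal s y).coeff (#s - 1) =
      ∑ j ∈ s, (y j - u j) := by
    rw [coeff_sub, Lagrange.nodal, Lagrange.nodal, prod_X_sub_C_coeff_card_pred _ _ hs.card_pos,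
      prod_X_sub_C_coeff_card_pred _ _ hs.card_pos, sum_sub_distrib]
    ring
  rw [← hcoeff, Lagrange.coeff_eq_sum hy hdeg]
  refine sum_congr rfl fun i hi ↦ ?_
  rw [eval_sub, Lagrange.eval_nodal_at_node hi, sub_zero, Lagrange.eval_nodal]

-- This is `sum_prod_sub_div_prod_erase_sub` with the extra node `-c` and the extra zero `-b`.
theorem sub_mul_prod_sub_div_add (α : ι → K) (b c : K) (hy : Set.InjOn y s)
    (hc : ∀ i ∈ s, c + y i ≠ 0) :
    (c - b) * ∏ j ∈ s, (c - α j) / (c + y j) = (c - b - ∑ j ∈ s, (α j + y j)) +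
      ∑ i ∈ s, (b + y i) / (c + y i) *
        ((∏ j ∈ s, (α j + y i)) / ∏ j ∈ s.erase i, (y i - y j)) := by
  have hinj : Set.InjOn (fun o : Option ι ↦ o.elim (-c) y) (insertNone s) := by
    rintro (_ | i) hi (_ | j) hj hij
    · rfl
    · exact absurd (by simpa using congrArg (c + ·) hij.symm) (hc j (by simpa using hj))
    · exact absurd (by simpa using congrArg (c + ·) hij) (hc i (by simpa using hi))
    · exact congrArg some (hy (by simpa using hi) (by simpa using hj) hij)
  have hnone : (insertNone s).erase none = s.map Function.Embedding.some := by
    ext o; cases o <;> simp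
  have hsome (i : ι) : (insertNone s).erase (some i) = insertNone (s.erase i) := by
    ext o; cases o <;> simp
  have key := sum_prod_sub_div_prod_erase_sub (fun o : Option ι ↦ o.elim (-b) (fun j ↦ -α j)) hinj
  simp only [sum_insertNone, prod_insertNone, hnone, hsome, prod_map, Option.elim_none,
    Option.elim_some, Function.Embedding.some_apply, sub_neg_eq_add, add_comm (y _),
    mul_div_assoc, ← prod_div_distrib] at key
  have hprod : ∏ j ∈ s, (-c + α j) / (-c - y j) = ∏ j ∈ s, (c - α j) / (c + y j) :=
    prod_congr rfl fun j _ ↦ by rw [← neg_div_neg_eq]; ring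
  have hterm (i : ι) :
      (b + y i) * ((∏ j ∈ s, (α j + y i)) / ((c + y i) * ∏ j ∈ s.erase i, (y i - y j))) =
        (b + y i) / (c + y i) * ((∏ j ∈ s, (α j + y i)) / ∏ j ∈ s.erase i, (y i - y j)) := by
    rw [div_mul_div_comm, mul_div_assoc]
  simp only [hprod, hterm] at key
  linear_combination -key

end PartialFractions

section DifferenceProduct

variable {R ι : Type*} [CommRing R] [Fintype ι] [LinearOrder ι]

/-- The difference product (Vandermonde product) `∏_{i < j} (y i - y j)`. -/
def differenceProduct (y : ι → R) : R :=
  ∏ i, ∏ j, if i < j then y i - y j else 1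

theorem differenceProduct_ne_zero [IsDomain R] {y : ι → R} (hy : Function.Injective y) :
    differenceProduct y ≠ 0 := by
  simp only [differenceProduct, prod_ne_zero_iff]
  intro i _ j _
  split_ifs with hij
  · exact sub_ne_zero.2 (hy.ne hij.ne)
  · exact one_ne_zero

theorem differenceProduct_eq_mul_prod_erase (y : ι → R) (i : ι) :
    differenceProduct y = (∏ j ∈ univ.erase i, if i < j then 1 else -1) *
      (∏ j ∈ univ.erase i, (y i - y j)) *
      ∏ p ∈ univ.erase i, ∏ q ∈ univ.erase i, if p < q then y p - y q else 1 := by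
  have hrow (p : ι) : (∏ q, if p < q then y p - y q else 1) =
      (if p < i then y p - y i else 1) *
        ∏ q ∈ univ.erase i, if p < q then y p - y q else 1 :=
    (mul_prod_erase _ _ (mem_univ i)).symm
  rw [differenceProduct, ← mul_prod_erase _ _ (mem_univ i)]
  simp only [hrow, lt_irrefl, if_false, one_mul, prod_mul_distrib]
  rw [← mul_assoc]
  congr 1
  rw [← prod_mul_distrib, ← prod_mul_distrib]
  refine prod_congr rfl fun j hj ↦ ?_
  rcases lt_or_gt_of_ne (ne_of_mem_erase hj) with h | h <;> simp [h, h.not_gt]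

theorem differenceProduct_add_single_mul (y : ι → R) (i : ι) (t : R) :
    differenceProduct (y + Pi.single i t : ι → R) * ∏ j ∈ univ.erase i, (y i - y j) =
      differenceProduct y * ∏ j ∈ univ.erase i, (y i + t - y j) := by
  set y' : ι → R := y + Pi.single i t with hy'
  have hself : y' i = y i + t := by simp [hy']
  have hne {j : ι} (hj : j ∈ univ.erase i) : y' j = y j := by simp [hy', ne_of_mem_erase hj]
  have hrow : ∏ j ∈ univ.erase i, (y' i - y' j) = ∏ j ∈ univ.erase i, (y i + t - y j) :=
    prod_congr rfl fun j hj ↦ by rw [hself, hne hj]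
  have hrest : (∏ p ∈ univ.erase i, ∏ q ∈ univ.erase i, if p < q then y' p - y' q else 1) =
      ∏ p ∈ univ.erase i, ∏ q ∈ univ.erase i, if p < q then y p - y q else 1 :=
    prod_congr rfl fun p hp ↦ prod_congr rfl fun q hq ↦ by rw [hne hp, hne hq]
  rw [differenceProduct_eq_mul_prod_erase y' i, differenceProduct_eq_mul_prod_erase y i, hrow,
    hrest]
  ring

end DifferenceProduct

section RisingFactorial

variable {R : Type*} [CommRing R]

theorem ascPochhammer_succ_eval_left (n : ℕ) (z : R) :
    (ascPochhammer R (n + 1)).eval z = z * (ascPochhammer R n).eval (z + 1) := by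
  simp [ascPochhammer_succ_left, eval_comp]

theorem ascPochhammer_eval_add (m n : ℕ) (z : R) :
    (ascPochhammer R (m + n)).eval z =
      (ascPochhammer R m).eval z * (ascPochhammer R n).eval (z + m) := by
  simp [← ascPochhammer_mul, eval_comp]

theorem ascPochhammer_eval_ne_zero_of_le {m n : ℕ} {z : R} (hmn : m ≤ n)
    (h : (ascPochhammer R n).eval z ≠ 0) : (ascPochhammer R m).eval z ≠ 0 := by
  rw [← Nat.add_sub_cancel' hmn, ascPochhammer_eval_add] at h
  exact left_ne_zero_of_mul h

theorem add_natCast_ne_zero_of_ascPochhammer_eval {m n : ℕ} {z : R} (hmn : m < n)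
    (h : (ascPochhammer R n).eval z ≠ 0) : z + m ≠ 0 := by
  have hsucc := ascPochhammer_eval_ne_zero_of_le (Nat.succ_le_of_lt hmn) h
  rw [ascPochhammer_succ_eval] at hsucc
  exact right_ne_zero_of_mul hsucc

theorem ascPochhammer_eval_one_sub_mul (z : R) {M n : ℕ} (hn : n ≤ M) :
    (ascPochhammer R n).eval (1 - M - z) * (ascPochhammer R (M - n)).eval z =
      (-1) ^ n * (ascPochhammer R M).eval z := by
  have hsplit := ascPochhammer_eval_add (M - n) n z
  rw [Nat.sub_add_cancel hn, Nat.cast_sub hn] at hsplit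
  rw [show (1 : R) - M - z = -(z + M - 1) by ring, ascPochhammer_eval_neg_eq_descPochhammer,
    descPochhammer_eval_eq_ascPochhammer, hsplit,
    show z + (M : R) - 1 - n + 1 = z + (M - n) by ring]
  ring

theorem ascPochhammer_eval_neg_natCast (M n : ℕ) :
    (ascPochhammer R n).eval (-(M : R)) = (-1) ^ n * M.descFactorial n := by
  rw [ascPochhammer_eval_neg_eq_descPochhammer, descPochhammer_eval_eq_descFactorial]

theorem injective_add_natCast {ι : Type*} {x : ι → R} {M : ℕ} (hx : Function.Injective x)
    (hxM : ∀ i j, (ascPochhammer R M).eval (1 + x i - x j) ≠ 0)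
    {k : ι → ℕ} (hk : ∀ i, k i ≤ M) : Function.Injective fun i ↦ x i + (k i : R) := by
  have key {i j : ι} (hle : k i ≤ k j) (h : x i + (k i : R) = x j + k j) : i = j := by
    obtain ⟨d, hd⟩ := Nat.exists_eq_add_of_le hle
    rw [hd, Nat.cast_add] at h
    rcases d with _ | m
    · exact hx (by simpa using h)
    · refine absurd ?_ (add_natCast_ne_zero_of_ascPochhammer_eval
        (show m < M by have := hk j; omega) (hxM j i))
      push_cast at h
      linear_combination -h
  intro i j h
  rcases le_total (k i) (k j) with hle | hle
  · exact key hle h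
  · exact (key hle h.symm).symm

/-- The factor `M (M - 1) ⋯ (M - n + 1) (z)_{M - n}`, which is `(z)_M (-M)_n / (1 - M - z)_n`
cleared of denominators; it vanishes for `n > M`. -/
noncomputable def saalschuetzCoeff (M : ℕ) (z : R) (n : ℕ) : R :=
  M.descFactorial n * (ascPochhammer R (M - n)).eval z

theorem saalschuetzCoeff_of_lt {M n : ℕ} (h : M < n) (z : R) : saalschuetzCoeff M z n = 0 := by
  simp [saalschuetzCoeff, Nat.descFactorial_of_lt h]

theorem saalschuetzCoeff_succ (M n : ℕ) (z : R) :
    saalschuetzCoeff (M + 1) z n =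
      (z - n) * saalschuetzCoeff M (z + 1) n + n * saalschuetzCoeff M (z + 1) (n - 1) := by
  rcases n with _ | n
  · simp [saalschuetzCoeff, ascPochhammer_succ_eval_left]
  rcases lt_trichotomy n M with h | rfl | h
  · obtain ⟨d, hd⟩ := Nat.exists_eq_add_of_lt h
    have hcast : (M : R) = n + d + 1 := by simp [hd]
    rw [saalschuetzCoeff, saalschuetzCoeff, saalschuetzCoeff, Nat.succ_descFactorial_succ,
      Nat.descFactorial_succ, Nat.add_sub_add_right, Nat.add_sub_cancel,
      show M - n = d + 1 by omega, show M - (n + 1) = d by omega,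
      ascPochhammer_succ_eval_left d z, ascPochhammer_succ_eval d (z + 1)]
    push_cast
    rw [hcast]
    ring
  · rw [saalschuetzCoeff, Nat.succ_descFactorial_succ]
    simp [saalschuetzCoeff]
  · simp [saalschuetzCoeff_of_lt, h, h.trans (Nat.lt_succ_self n)]

theorem ascPochhammer_eval_neg_div_eq_saalschuetzCoeff_div {K : Type*} [Field K] {M n : ℕ} {z : K}
    (hz : (ascPochhammer K M).eval z ≠ 0) (hn : n ≤ M) :
    (ascPochhammer K n).eval (-(M : K)) / (ascPochhammer K n).eval (1 - M - z) =
      saalschuetzCoeff M z n / (ascPochhammer K M).eval z := by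
  have hrefl := ascPochhammer_eval_one_sub_mul z hn
  have hne : (ascPochhammer K n).eval (1 - M - z) ≠ 0 :=
    left_ne_zero_of_mul (hrefl ▸ mul_ne_zero (pow_ne_zero n (by simp)) hz)
  rw [div_eq_div_iff hne hz, ascPochhammer_eval_neg_natCast, saalschuetzCoeff]
  linear_combination -(M.descFactorial n : K) * hrefl

end RisingFactorial

section Multiindices

variable (ι : Type*) [Fintype ι] [DecidableEq ι]

/-- The multi-indices `k : ι → ℕ` with `|k| ≤ M`, cut out of the box `[0, M]^ι`. -/
def multiindicesLE (M : ℕ) : Finset (ι → ℕ) :=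
  (Iic fun _ ↦ M).filter fun k ↦ ∑ i, k i ≤ M

variable {ι}

theorem mem_multiindicesLE {M : ℕ} {k : ι → ℕ} : k ∈ multiindicesLE ι M ↔ ∑ i, k i ≤ M := by
  simp only [multiindicesLE, mem_filter, mem_Iic, and_iff_right_iff_imp]
  exact fun h i ↦ (single_le_sum_of_canonicallyOrdered (mem_univ i)).trans h

theorem apply_le_of_mem_multiindicesLE {M : ℕ} {k : ι → ℕ} (hk : k ∈ multiindicesLE ι M) (i : ι) :
    k i ≤ M :=
  mem_Iic.1 (mem_filter.1 hk).1 i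

theorem multiindicesLE_subset_succ (M : ℕ) : multiindicesLE ι M ⊆ multiindicesLE ι (M + 1) :=
  fun _ hk ↦ mem_multiindicesLE.2 ((mem_multiindicesLE.1 hk).trans M.le_succ)

theorem multiindicesLE_zero : multiindicesLE ι 0 = {0} := by
  ext k
  simp [mem_multiindicesLE, funext_iff]

theorem sum_add_single_one (k : ι → ℕ) (i : ι) :
    ∑ j, (k + Pi.single i 1 : ι → ℕ) j = ∑ j, k j + 1 := by
  simp [sum_add_distrib]

theorem add_single_one_mem_multiindicesLE_succ {M : ℕ} {k : ι → ℕ} {i : ι} :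
    k + Pi.single i 1 ∈ multiindicesLE ι (M + 1) ↔ k ∈ multiindicesLE ι M := by
  rw [mem_multiindicesLE, mem_multiindicesLE, sum_add_single_one, Nat.add_le_add_iff_right]

theorem sum_multiindicesLE_add_single {A : Type*} [AddCommMonoid A] (M : ℕ) (i : ι)
    (f : (ι → ℕ) → A) (hf : ∀ k, k i = 0 → f k = 0) :
    ∑ k ∈ multiindicesLE ι M, f (k + Pi.single i 1) = ∑ k ∈ multiindicesLE ι (M + 1), f k := by
  refine sum_of_injOn (· + Pi.single i 1) (add_left_injective _).injOn
    (fun k hk ↦ add_single_one_mem_multiindicesLE_succ.2 hk) (fun k hk hk' ↦ hf k ?_)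
    (fun _ _ ↦ rfl)
  by_contra hki
  have hcancel : k - Pi.single i 1 + Pi.single i 1 = k :=
    tsub_add_cancel_of_le (update_le_iff.2 ⟨Nat.one_le_iff_ne_zero.2 hki, fun _ _ ↦ zero_le⟩)
  exact hk' ⟨k - Pi.single i 1,
    add_single_one_mem_multiindicesLE_succ.1 (hcancel.symm ▸ hk), hcancel⟩

end Multiindices

section Summand

variable {K ι : Type*} [Field K] [Fintype ι]

/-- The part of the summand that involves `k i` alone, with `k i = n`. -/
noncomputable def rowFactor (a x : ι → K) (b c : K) (i : ι) (n : ℕ) : K :=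
  (∏ j, (ascPochhammer K n).eval (a j + x i - x j) / (ascPochhammer K n).eval (1 + x i - x j)) *
    ((ascPochhammer K n).eval (b + x i) / (ascPochhammer K n).eval (c + x i))

theorem rowFactor_zero (a x : ι → K) (b c : K) (i : ι) : rowFactor a x b c i 0 = 1 := by
  simp [rowFactor]

theorem rowFactor_succ (a x : ι → K) (b c : K) (i : ι) (n : ℕ) :
    rowFactor a x b c i (n + 1) = rowFactor a x b c i n *
      ((∏ j, (a j - x j + (x i + n))) / (∏ j, (1 + x i - x j + n)) *
        ((b + (x i + n)) / (c + (x i + n)))) := by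
  have hfactor (j : ι) : a j + x i - x j + (n : K) = a j - x j + (x i + n) := by ring
  simp only [rowFactor, ascPochhammer_succ_eval, mul_div_mul_comm, prod_mul_distrib,
    prod_div_distrib, hfactor, add_assoc b, add_assoc c]
  ring

theorem rowFactor_add_one_div (a x : ι → K) (b c : K) (i : ι) (n : ℕ) :
    rowFactor a x b (c + 1) i n / (c + x i) = rowFactor a x b c i n / (c + (x i + n)) := by
  have hden : (ascPochhammer K n).eval (c + 1 + x i) * (c + x i) =
      (ascPochhammer K n).eval (c + x i) * (c + (x i + n)) := by
    rw [add_right_comm, mul_comm, ← ascPochhammer_succ_eval_left, ascPochhammer_succ_eval,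
      add_assoc]
  simp only [rowFactor, mul_div_assoc, div_div, hden]

/-- The coefficient of the partial fraction at the node `x i + k i` in
`∏ j, (t - x j) / (t - (x j + k j))`. -/
def shiftCoeff [DecidableEq ι] (x : ι → K) (k : ι → ℕ) (i : ι) : K :=
  (∏ j, (x i + k i - x j)) / ∏ j ∈ univ.erase i, (x i + k i - (x j + k j))

theorem shiftCoeff_of_eq_zero [DecidableEq ι] (x : ι → K) {k : ι → ℕ} {i : ι} (hk : k i = 0) :
    shiftCoeff x k i = 0 := by
  rw [shiftCoeff, prod_eq_zero (mem_univ i) (by simp [hk]), zero_div]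

theorem sum_shiftCoeff [DecidableEq ι] {x : ι → K} {k : ι → ℕ}
    (hk : Function.Injective fun i ↦ x i + (k i : K)) :
    ∑ i, shiftCoeff x k i = (∑ i, k i : ℕ) := by
  have key := sum_prod_sub_div_prod_erase_sub x (s := univ) hk.injOn
  simpa only [shiftCoeff, add_sub_cancel_left, ← Nat.cast_sum] using key

theorem shiftCoeff_add_single [DecidableEq ι] (x : ι → K) (k : ι → ℕ) (i : ι) :
    shiftCoeff x (k + Pi.single i 1) i = (∏ j, (1 + x i - x j + k i)) /
      ∏ j ∈ univ.erase i, (x i + k i + 1 - (x j + k j)) := by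
  rw [shiftCoeff]
  congr 1
  · exact prod_congr rfl fun j _ ↦ by simp; ring
  · exact prod_congr rfl fun j hj ↦ by simp [ne_of_mem_erase hj, add_assoc]

variable [LinearOrder ι]

/-- The summand of the `A_r` Pfaff–Saalschütz sum without its factor depending on `M`. -/
noncomputable def saalschuetzWeight (a x : ι → K) (b c : K) (k : ι → ℕ) : K :=
  differenceProduct (fun i ↦ x i + (k i : K)) / differenceProduct x *
    ∏ i, rowFactor a x b c i (k i)

theorem saalschuetzWeight_zero (a : ι → K) {x : ι → K} (b c : K) (hx : Function.Injective x) :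
    saalschuetzWeight a x b c 0 = 1 := by
  simp [saalschuetzWeight, rowFactor_zero, differenceProduct_ne_zero hx]

theorem saalschuetzWeight_eq (a x : ι → K) (b c : K) (k : ι → ℕ) :
    saalschuetzWeight a x b c k =
      (∏ i, ∏ j, if i < j then (x i + k i - x j - k j) / (x i - x j) else 1) *
        (∏ i, ∏ j, (ascPochhammer K (k i)).eval (a j + x i - x j) /
          (ascPochhammer K (k i)).eval (1 + x i - x j)) *
        ∏ i, (ascPochhammer K (k i)).eval (b + x i) / (ascPochhammer K (k i)).eval (c + x i) := by
  simp only [saalschuetzWeight, differenceProduct, rowFactor, ← prod_div_distrib,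
    prod_mul_distrib, ← mul_assoc]
  congr 2
  refine prod_congr rfl fun i _ ↦ prod_congr rfl fun j _ ↦ ?_
  split_ifs
  · rw [← sub_sub]
  · rw [div_one]

theorem saalschuetzWeight_add_one_div (a x : ι → K) (b c : K) (k : ι → ℕ) :
    saalschuetzWeight a x b (c + 1) k / ∏ i, (c + x i) =
      saalschuetzWeight a x b c k / ∏ i, (c + (x i + k i)) := by
  simp only [saalschuetzWeight, mul_div_assoc, ← prod_div_distrib, rowFactor_add_one_div]

theorem prod_rowFactor_add_single (a x : ι → K) (b c : K) (k : ι → ℕ) (i : ι) :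
    ∏ j, rowFactor a x b c j ((k + Pi.single i 1 : ι → ℕ) j) =
      (∏ j, rowFactor a x b c j (k j)) *
        ((∏ j, (a j - x j + (x i + k i))) / (∏ j, (1 + x i - x j + k i)) *
          ((b + (x i + k i)) / (c + (x i + k i)))) := by
  have hrest : ∏ j ∈ univ.erase i, rowFactor a x b c j ((k + Pi.single i 1 : ι → ℕ) j) =
      ∏ j ∈ univ.erase i, rowFactor a x b c j (k j) :=
    prod_congr rfl fun j hj ↦ by simp [ne_of_mem_erase hj]
  rw [← mul_prod_erase _ _ (mem_univ i), hrest, ← mul_prod_erase univ _ (mem_univ i), Pi.add_apply,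
    Pi.single_eq_same, rowFactor_succ]
  ring

theorem saalschuetzWeight_add_single_mul_shiftCoeff (a : ι → K) {x : ι → K} (b c : K) {k : ι → ℕ}
    {i : ι} (hk : Function.Injective fun j ↦ x j + (k j : K))
    (hk' : Function.Injective fun j ↦ x j + ((k + Pi.single i 1 : ι → ℕ) j : K))
    (hki : ∀ j, 1 + x i - x j + k i ≠ 0) :
    saalschuetzWeight a x b c (k + Pi.single i 1) * shiftCoeff x (k + Pi.single i 1) i =
      saalschuetzWeight a x b c k * ((b + (x i + k i)) / (c + (x i + k i)) *
        ((∏ j, (a j - x j + (x i + k i))) / ∏ j ∈ univ.erase i, (x i + k i - (x j + k j)))) := by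
  have hold : ∏ j ∈ univ.erase i, (x i + k i - (x j + k j)) ≠ 0 :=
    prod_ne_zero_iff.2 fun j hj ↦ sub_ne_zero.2 (hk.ne (ne_of_mem_erase hj).symm)
  have hnew : ∏ j ∈ univ.erase i, (x i + k i + 1 - (x j + k j)) ≠ 0 := by
    refine prod_ne_zero_iff.2 fun j hj ↦ sub_ne_zero.2 ?_
    simpa [ne_of_mem_erase hj, add_assoc] using hk'.ne (ne_of_mem_erase hj).symm
  have hrow : ∏ j, (1 + x i - x j + (k i : K)) ≠ 0 := prod_ne_zero_iff.2 fun j _ ↦ hki j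
  have hnodes : (fun j ↦ x j + ((k + Pi.single i 1 : ι → ℕ) j : K)) =
      (fun j ↦ x j + (k j : K)) + Pi.single i 1 := by
    ext j
    rcases eq_or_ne j i with rfl | hj <;> simp [*, add_assoc]
  have hdiff : differenceProduct (fun j ↦ x j + ((k + Pi.single i 1 : ι → ℕ) j : K)) =
      differenceProduct (fun j ↦ x j + (k j : K)) *
        (∏ j ∈ univ.erase i, (x i + k i + 1 - (x j + k j))) /
          ∏ j ∈ univ.erase i, (x i + k i - (x j + k j)) := by
    rw [hnodes, eq_div_iff hold]
    exact differenceProduct_add_single_mul _ i 1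
  rw [saalschuetzWeight, saalschuetzWeight, prod_rowFactor_add_single, hdiff,
    shiftCoeff_add_single]
  field_simp

theorem saalschuetzWeight_add_one_mul (a : ι → K) {x : ι → K} (b c : K) {M : ℕ}
    (hx : Function.Injective x)
    (hxM : ∀ i j, (ascPochhammer K (M + 1)).eval (1 + x i - x j) ≠ 0)
    (hc : ∀ i, (ascPochhammer K (M + 1)).eval (c + x i) ≠ 0)
    {k : ι → ℕ} (hk : k ∈ multiindicesLE ι M) :
    saalschuetzWeight a x b (c + 1) k * ((c - b) * ∏ i, (c + x i - a i) / (c + x i)) =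
      saalschuetzWeight a x b c k * (c - ∑ i, a i - b - (∑ i, k i : ℕ)) +
        ∑ i, saalschuetzWeight a x b c (k + Pi.single i 1) *
          shiftCoeff x (k + Pi.single i 1) i := by
  have hkM (i : ι) : k i < M + 1 := Nat.lt_succ_of_le (apply_le_of_mem_multiindicesLE hk i)
  have hinj : Function.Injective fun i ↦ x i + (k i : K) :=
    injective_add_natCast hx hxM fun i ↦ (hkM i).le
  have hinj' (i : ι) : Function.Injective fun j ↦ x j + ((k + Pi.single i 1 : ι → ℕ) j : K) :=
    injective_add_natCast hx hxM
      (apply_le_of_mem_multiindicesLE (add_single_one_mem_multiindicesLE_succ.2 hk))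
  have hck : ∀ i ∈ univ, c + (x i + (k i : K)) ≠ 0 := fun i _ ↦ by
    rw [← add_assoc]
    exact add_natCast_ne_zero_of_ascPochhammer_eval (hkM i) (hc i)
  have hki (i j : ι) : 1 + x i - x j + (k i : K) ≠ 0 :=
    add_natCast_ne_zero_of_ascPochhammer_eval (hkM i) (hxM i j)
  have hsum : ∑ i, (a i - x i + (x i + (k i : K))) = ∑ i, a i + (∑ i, k i : ℕ) := by
    rw [Nat.cast_sum, ← sum_add_distrib]
    exact sum_congr rfl fun i _ ↦ by ring
  calc
    _ = (c - b) * (∏ i, (c + x i - a i)) *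
        (saalschuetzWeight a x b (c + 1) k / ∏ i, (c + x i)) := by rw [prod_div_distrib]; ring
    _ = saalschuetzWeight a x b c k *
        ((c - b) * ∏ i, (c - (a i - x i)) / (c + (x i + k i))) := by
      simp only [saalschuetzWeight_add_one_div, prod_div_distrib, sub_sub_eq_add_sub]; ring
    _ = _ := by
      rw [sub_mul_prod_sub_div_add (fun i ↦ a i - x i) b c hinj.injOn hck, hsum, mul_add, mul_sum]
      congr 1
      · ring
      · exact sum_congr rfl fun i _ ↦
          (saalschuetzWeight_add_single_mul_shiftCoeff a b c hinj (hinj' i) (hki i)).symm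

theorem sum_saalschuetzWeight_mul_saalschuetzCoeff_succ (a : ι → K) {x : ι → K} (b c : K) {M : ℕ}
    (hx : Function.Injective x)
    (hxM : ∀ i j, (ascPochhammer K (M + 1)).eval (1 + x i - x j) ≠ 0)
    (hc : ∀ i, (ascPochhammer K (M + 1)).eval (c + x i) ≠ 0) :
    ∑ k ∈ multiindicesLE ι (M + 1),
        saalschuetzWeight a x b c k * saalschuetzCoeff (M + 1) (c - ∑ i, a i - b) (∑ i, k i) =
      (∑ k ∈ multiindicesLE ι M, saalschuetzWeight a x b (c + 1) k *
        saalschuetzCoeff M (c + 1 - ∑ i, a i - b) (∑ i, k i)) *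
          ((c - b) * ∏ i, (c + x i - a i) / (c + x i)) := by
  rw [show c + 1 - ∑ i, a i - b = c - ∑ i, a i - b + 1 by ring]
  set z : K := c - ∑ i, a i - b
  set w := saalschuetzWeight a x b c
  have hdiag : ∑ k ∈ multiindicesLE ι M,
        w k * (z - (∑ i, k i : ℕ)) * saalschuetzCoeff M (z + 1) (∑ i, k i) =
      ∑ k ∈ multiindicesLE ι (M + 1),
        w k * (z - (∑ i, k i : ℕ)) * saalschuetzCoeff M (z + 1) (∑ i, k i) :=
    sum_subset (multiindicesLE_subset_succ M) fun k _ hk ↦ by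
      rw [saalschuetzCoeff_of_lt (not_le.1 (mt mem_multiindicesLE.2 hk)), mul_zero]
  have hshift (i : ι) : ∑ k ∈ multiindicesLE ι M, w (k + Pi.single i 1) *
        shiftCoeff x (k + Pi.single i 1) i * saalschuetzCoeff M (z + 1) (∑ j, k j) =
      ∑ k ∈ multiindicesLE ι (M + 1),
        w k * shiftCoeff x k i * saalschuetzCoeff M (z + 1) (∑ j, k j - 1) := by
    rw [← sum_multiindicesLE_add_single M i _ fun k hk ↦ by simp [shiftCoeff_of_eq_zero x hk]]
    simp only [sum_add_single_one, Nat.add_sub_cancel]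
  symm
  calc
    _ = ∑ k ∈ multiindicesLE ι M, (w k * (z - (∑ i, k i : ℕ)) +
          ∑ i, w (k + Pi.single i 1) * shiftCoeff x (k + Pi.single i 1) i) *
            saalschuetzCoeff M (z + 1) (∑ i, k i) := by
      rw [sum_mul]
      refine sum_congr rfl fun k hk ↦ ?_
      rw [← saalschuetzWeight_add_one_mul a b c hx hxM hc hk]
      ring
    _ = ∑ k ∈ multiindicesLE ι (M + 1),
          (w k * (z - (∑ i, k i : ℕ)) * saalschuetzCoeff M (z + 1) (∑ i, k i) +
            w k * (∑ i, shiftCoeff x k i) * saalschuetzCoeff M (z + 1) (∑ i, k i - 1)) := by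
      simp only [add_mul, sum_mul, mul_sum, sum_add_distrib]
      rw [hdiag, sum_comm, sum_congr rfl fun i _ ↦ hshift i, sum_comm]
    _ = _ := by
      refine sum_congr rfl fun k hk ↦ ?_
      rw [sum_shiftCoeff (injective_add_natCast hx hxM (apply_le_of_mem_multiindicesLE hk)),
        saalschuetzCoeff_succ]
      ring

theorem sum_saalschuetzWeight_mul_saalschuetzCoeff (a : ι → K) {x : ι → K} (b c : K) {M : ℕ}
    (hx : Function.Injective x) (hxM : ∀ i j, (ascPochhammer K M).eval (1 + x i - x j) ≠ 0)
    (hc : ∀ i, (ascPochhammer K M).eval (c + x i) ≠ 0) :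
    ∑ k ∈ multiindicesLE ι M,
        saalschuetzWeight a x b c k * saalschuetzCoeff M (c - ∑ i, a i - b) (∑ i, k i) =
      (ascPochhammer K M).eval (c - b) *
        ∏ i, (ascPochhammer K M).eval (c + x i - a i) / (ascPochhammer K M).eval (c + x i) := by
  induction M generalizing c with
  | zero => simp [multiindicesLE_zero, saalschuetzWeight_zero, hx, saalschuetzCoeff]
  | succ M ih =>
    have hxM' (i j : ι) : (ascPochhammer K M).eval (1 + x i - x j) ≠ 0 :=
      ascPochhammer_eval_ne_zero_of_le M.le_succ (hxM i j)
    have hc' (i : ι) : (ascPochhammer K M).eval (c + 1 + x i) ≠ 0 := by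
      have h := hc i
      rw [ascPochhammer_succ_eval_left] at h
      exact add_right_comm c (x i) 1 ▸ right_ne_zero_of_mul h
    rw [sum_saalschuetzWeight_mul_saalschuetzCoeff_succ a b c hx hxM hc, ih (c + 1) hxM' hc']
    simp only [ascPochhammer_succ_eval_left, mul_div_mul_comm, prod_mul_distrib,
      sub_add_eq_add_sub, add_right_comm c (x _) 1]
    ring

end Summand

theorem Ar_pfaff_saalschuetz_general {K ι : Type*} [Field K] [Fintype ι] [LinearOrder ι] (M : ℕ)
    (a x : ι → K) (b c : K) (hx : Function.Injective x)
    (hxM : ∀ i j, (ascPochhammer K M).eval (1 + x i - x j) ≠ 0)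
    (hc : ∀ i, (ascPochhammer K M).eval (c + x i) ≠ 0)
    (hz : (ascPochhammer K M).eval (c - ∑ j, a j - b) ≠ 0) :
    ∑ k ∈ (Iic fun _ : ι ↦ M).filter fun k ↦ ∑ i, k i ≤ M,
        (∏ i, ∏ j, if i < j then (x i + k i - x j - k j) / (x i - x j) else 1) *
          (∏ i, ∏ j, (ascPochhammer K (k i)).eval (a j + x i - x j) /
            (ascPochhammer K (k i)).eval (1 + x i - x j)) *
          (∏ i, (ascPochhammer K (k i)).eval (b + x i) / (ascPochhammer K (k i)).eval (c + x i)) *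
          ((ascPochhammer K (∑ i, k i)).eval (-(M : K)) /
            (ascPochhammer K (∑ i, k i)).eval (∑ j, a j + b + 1 - M - c)) =
      (ascPochhammer K M).eval (c - b) / (ascPochhammer K M).eval (c - ∑ j, a j - b) *
        ∏ i, (ascPochhammer K M).eval (c + x i - a i) / (ascPochhammer K M).eval (c + x i) := by
  rw [div_mul_eq_mul_div, ← sum_saalschuetzWeight_mul_saalschuetzCoeff a b c hx hxM hc, sum_div]
  refine sum_congr rfl fun k hk ↦ ?_
  rw [← saalschuetzWeight_eq, mul_div_assoc,
    ← ascPochhammer_eval_neg_div_eq_saalschuetzCoeff_div hz (mem_multiindicesLE.1 hk),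
    show 1 - (M : K) - (c - ∑ j, a j - b) = ∑ j, a j + b + 1 - M - c by ring]

theorem poch_natCast (a : ℂ) (n : ℕ) : poch a n = (ascPochhammer ℂ n).eval a := by
  rw [poch, if_pos (Int.natCast_nonneg n), Int.toNat_natCast]
  induction n with
  | zero => simp
  | succ n ih => rw [prod_range_succ, ih, ascPochhammer_succ_eval]

/-- The `A_r` Pfaff–Saalschütz summation (Milne); the sum ranges over all
`k ∈ ℕ^r` with `k_1 + ⋯ + k_r ≤ M` (each such `k` satisfies `k_i ≤ M`, so the
index set is the filtered box below). -/
theorem Ar_pfaff_saalschuetz (r : ℕ) (hr : 1 ≤ r) (M : ℕ)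
    (a x : Fin r → ℂ) (b c : ℂ)
    (hx : ∀ i j : Fin r, i ≠ j → ∀ m : ℤ, x i - x j ≠ (m : ℂ))
    (hd1 : ∀ (i j : Fin r) (m : ℕ), m ≤ M → poch (1 + x i - x j) m ≠ 0)
    (hd2 : ∀ (i : Fin r) (m : ℕ), m ≤ M → poch (c + x i) m ≠ 0)
    (hd3 : ∀ m : ℕ, m ≤ M → poch ((∑ j, a j) + b + 1 - M - c) m ≠ 0)
    (hd4 : poch (c - (∑ j, a j) - b) M ≠ 0) :
    (∑ k ∈ (Finset.Iic (fun _ : Fin r => M)).filter (fun k : Fin r → ℕ => ∑ i, k i ≤ M),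
        (∏ i : Fin r, ∏ j : Fin r,
            if i < j then (x i + k i - x j - (k j : ℂ)) / (x i - x j) else 1) *
          (∏ i : Fin r, ∏ j : Fin r,
            poch (a j + x i - x j) (k i) / poch (1 + x i - x j) (k i)) *
          (∏ i : Fin r, poch (b + x i) (k i) / poch (c + x i) (k i)) *
          (poch (-(M : ℂ)) (∑ i, (k i : ℤ)) /
            poch ((∑ j, a j) + b + 1 - M - c) (∑ i, (k i : ℤ)))) =
      poch (c - b) M / poch (c - (∑ j, a j) - b) M *
        ∏ i : Fin r, poch (c + x i - a i) M / poch (c + x i) M := by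
  simp only [← Nat.cast_sum, poch_natCast] at *
  exact Ar_pfaff_saalschuetz_general M a x b c
    (fun i j h ↦ by_contra fun hij ↦ hx i j hij 0 (by simp [h]))
    (fun i j ↦ hd1 i j M le_rfl) (fun i ↦ hd2 i M le_rfl) hd4
end
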